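/- arXiv:2507.06115 — 3 statements merged into one kernel-verified Lean document; each statement's English description precedes it below -/
import Mathlib

section
/- Let d ≥ 1, r ≥ 1 and let 1 ≤ p, q ≤ ∞ satisfy 1/p + 1/q = log₂(2 + 2^r)/r. Then for every function f : ℤ^d → ℝ supported in {0,1}^d one has ‖f*f‖_{ℓ^r(ℤ^d)} ≤ ‖f‖_{ℓ^p(ℤ^d)} ‖f‖_{ℓ^q(ℤ^d)}. -/
open scoped BigOperators ENNReal

/-- Convolution of two functions on `ℤ^d`. -/
noncomputable def cconv {d : ℕ} (f g : (Fin d → ℤ) → ℝ) : (Fin d → ℤ) → ℝ :=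
  fun m => ∑' u : Fin d → ℤ, f u * g (m - u)

/-- A point of `ℤ^d` lies in the hypercube `{0,1}^d`. -/
def InCube {d : ℕ} (x : Fin d → ℤ) : Prop := ∀ i, x i = 0 ∨ x i = 1

/-- A function on `ℤ^d` is supported in `{0,1}^d`. -/
def SupportedInCube {d : ℕ} (f : (Fin d → ℤ) → ℝ) : Prop :=
  ∀ x : Fin d → ℤ, ¬ InCube x → f x = 0

/-- The `ℓ^s` norm of a function on `ℤ^d` (for `0 < s < ∞`). -/
noncomputable def lnorm {d : ℕ} (s : ℝ) (f : (Fin d → ℤ) → ℝ) : ℝ :=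
  (∑' x : Fin d → ℤ, |f x| ^ s) ^ (1 / s)


/-- The `ℓ^s` norm for an extended exponent `s ∈ (0,∞]`:
for `s = ∞` it is the sup norm, otherwise the usual `ℓ^s` norm. -/
noncomputable def lnormE {d : ℕ} (s : ℝ≥0∞) (f : (Fin d → ℤ) → ℝ) : ℝ :=
  if s = ∞ then ⨆ x : Fin d → ℤ, |f x|
  else (∑' x : Fin d → ℤ, |f x| ^ s.toReal) ^ (1 / s.toReal)

theorem aux_g1 (X : ℝ) (hX : 0 < X) : X ^ (1:ℝ) + (1 - X) / (1 + X) * (1 + X) ^ (1:ℝ) = 1 := by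
  rw [Real.rpow_one, Real.rpow_one]; field_simp; ring
theorem aux_g2 (X : ℝ) (hX : 0 < X) : X ^ (2:ℝ) + (1 - X) / (1 + X) * (1 + X) ^ (2:ℝ) = 1 := by
  rw [Real.rpow_two, Real.rpow_two]; field_simp; ring
theorem aux_conv (X : ℝ) (hX : 0 < X) (hX1 : X ≤ 1) :
    ConvexOn ℝ Set.univ (fun k : ℝ => X ^ k + (1 - X) / (1 + X) * (1 + X) ^ k) := by
  have h1 := convexOn_rpow_left hX
  have h2 := convexOn_rpow_left (show (0:ℝ) < 1 + X by linarith)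
  have h3 := h2.smul (show (0:ℝ) ≤ (1 - X) / (1 + X) from div_nonneg (by linarith) (by linarith))
  exact h1.add h3
theorem aux_ge (X k : ℝ) (hX : 0 < X) (hX1 : X ≤ 1) (hk : 2 ≤ k) :
    1 ≤ X ^ k + (1 - X) / (1 + X) * (1 + X) ^ k := by
  have h := (aux_conv X hX hX1).2 (Set.mem_univ 1) (Set.mem_univ k)
    (show 0 ≤ (k-2)/(k-1) from div_nonneg (by linarith) (by linarith))
    (show 0 ≤ 1/(k-1) from div_nonneg (by linarith) (by linarith))
    (by have : k - 1 ≠ 0 := by linarith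
        field_simp; ring)
  have e : ((k-2)/(k-1)) • (1:ℝ) + (1/(k-1)) • k = 2 := by
    have : k - 1 ≠ 0 := by linarith
    simp only [smul_eq_mul]; field_simp; ring
  rw [e] at h
  simp only [smul_eq_mul] at h
  rw [aux_g1 X hX, aux_g2 X hX] at h
  set g := X ^ k + (1 - X) / (1 + X) * (1 + X) ^ k
  have hk1 : 0 < k - 1 := by linarith
  have : (k-2)/(k-1) * 1 + 1/(k-1) * g = (k - 2 + g)/(k-1) := by field_simp
  rw [this, le_div_iff₀ hk1] at h
  linarith
theorem aux_le (X k : ℝ) (hX : 0 < X) (hX1 : X ≤ 1) (hk : 1 ≤ k) (hk2 : k ≤ 2) :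
    X ^ k + (1 - X) / (1 + X) * (1 + X) ^ k ≤ 1 := by
  have h := (aux_conv X hX hX1).2 (Set.mem_univ 1) (Set.mem_univ 2)
    (show 0 ≤ 2 - k by linarith) (show 0 ≤ k - 1 by linarith) (by ring)
  have e : (2 - k) • (1:ℝ) + (k-1) • (2:ℝ) = k := by
    simp only [smul_eq_mul]; ring
  rw [e] at h
  simp only [smul_eq_mul] at h
  rw [aux_g1 X hX, aux_g2 X hX] at h
  linarith

theorem aux_eq (k v : ℝ) :
    2 * ((2 * Real.cosh v) ^ (k-1) * Real.sinh v) - 2 * Real.sinh (k * v) =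
      Real.exp (k * v) * (Real.exp (-(2*v)) ^ k
        + (1 - Real.exp (-(2*v))) / (1 + Real.exp (-(2*v))) * (1 + Real.exp (-(2*v))) ^ k - 1) := by
  have hX := Real.exp_pos (-(2*v))
  have h1 : 2 * Real.cosh v = Real.exp v * (1 + Real.exp (-(2*v))) := by
    rw [Real.cosh_eq, mul_add, ← Real.exp_add]; ring_nf
  have h2 : 2 * Real.sinh v = Real.exp v * (1 - Real.exp (-(2*v))) := by
    rw [Real.sinh_eq, mul_sub, ← Real.exp_add]; ring_nf
  have h3 : 2 * Real.sinh (k*v) = Real.exp (k*v) * (1 - Real.exp (-(2*v)) ^ k) := by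
    rw [Real.sinh_eq, mul_sub, ← Real.exp_mul, ← Real.exp_add]; ring_nf
  rw [h3, show 2 * ((2 * Real.cosh v) ^ (k-1) * Real.sinh v)
    = (2 * Real.cosh v) ^ (k-1) * (2 * Real.sinh v) by ring, h2, h1]
  rw [Real.mul_rpow (Real.exp_pos v).le (by linarith), ← Real.exp_mul,
    Real.rpow_sub_one (by linarith : 1 + Real.exp (-(2*v)) ≠ 0)]
  have : Real.exp (k*v) = Real.exp (v * (k-1)) * Real.exp v := by
    rw [← Real.exp_add]; ring_nf
  rw [this]; field_simp; ring

theorem sinh_le_A (k v : ℝ) (hk : 2 ≤ k) (hv : 0 ≤ v) :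
    Real.sinh (k * v) ≤ (2 * Real.cosh v) ^ (k-1) * Real.sinh v := by
  have h := aux_ge (Real.exp (-(2*v))) k (Real.exp_pos _) (Real.exp_le_one_iff.2 (by linarith)) hk
  have e := aux_eq k v
  have := mul_nonneg (Real.exp_pos (k*v)).le (sub_nonneg.2 h)
  linarith
theorem sinh_ge_A (k v : ℝ) (hk : 1 ≤ k) (hk2 : k ≤ 2) (hv : 0 ≤ v) :
    (2 * Real.cosh v) ^ (k-1) * Real.sinh v ≤ Real.sinh (k * v) := by
  have h := aux_le (Real.exp (-(2*v))) k (Real.exp_pos _) (Real.exp_le_one_iff.2 (by linarith)) hk hk2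
  have e := aux_eq k v
  have := mul_nonneg (Real.exp_pos (k*v)).le (sub_nonneg.2 h)
  linarith

theorem cosh_pow_le (l v : ℝ) (hl : 1 ≤ l) :
    2 * Real.cosh (l * v) ≤ (2 * Real.cosh v) ^ l := by
  have h := Real.add_rpow_le_rpow_add (Real.exp_pos v).le (Real.exp_pos (-v)).le hl
  rw [← Real.exp_mul, ← Real.exp_mul] at h
  rw [Real.cosh_eq, Real.cosh_eq]
  convert h using 1 <;> ring_nf

theorem diag_ineq (k v : ℝ) (hk : 2 ≤ k) :
    2 * Real.cosh (k * v) + (2 ^ k - 2) ≤ (2 * Real.cosh v) ^ k := by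
  wlog hv : 0 ≤ v generalizing v
  · have := this (-v) (by linarith)
    simpa using this
  have hd : ∀ x, HasDerivAt (fun v => (2 * Real.cosh v) ^ k - 2 * Real.cosh (k * v))
      (2 * Real.sinh x * k * (2 * Real.cosh x) ^ (k-1) - 2 * (Real.sinh (k * x) * (k * 1))) x := by
    intro x
    refine HasDerivAt.sub ?_ ?_
    · exact ((Real.hasDerivAt_cosh x).const_mul 2).rpow_const (Or.inl (by have := Real.cosh_pos x; positivity))
    · exact (((hasDerivAt_id x).const_mul k).cosh).const_mul 2
  have hm : MonotoneOn (fun v => (2 * Real.cosh v) ^ k - 2 * Real.cosh (k * v)) (Set.Ici 0) := by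
    apply monotoneOn_of_deriv_nonneg (convex_Ici 0)
    · exact fun x _ => (hd x).continuousAt.continuousWithinAt
    · exact fun x _ => (hd x).differentiableAt.differentiableWithinAt
    · intro x hx
      rw [interior_Ici] at hx
      rw [(hd x).deriv]
      have := mul_le_mul_of_nonneg_left (sinh_le_A k x hk (le_of_lt hx)) (show 0 ≤ 2 * k by linarith)
      linarith
  have := hm (Set.mem_Ici.2 le_rfl) (Set.mem_Ici.2 hv) hv
  simp at this
  linarith

theorem anti_ineq (k r l v : ℝ) (hr : 1 ≤ r) (hk : 2 ≤ k) (hl : 1 ≤ l) (hl2 : l ≤ 2) (hkl : k = l * r) :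
    (2 * Real.cosh (l * v)) ^ r + (2 ^ k - 2 ^ r) ≤ (2 * Real.cosh v) ^ k := by
  wlog hv : 0 ≤ v generalizing v
  · have := this (-v) (by linarith)
    simpa using this
  have hd : ∀ x, HasDerivAt (fun v => (2 * Real.cosh v) ^ k - (2 * Real.cosh (l * v)) ^ r)
      (2 * Real.sinh x * k * (2 * Real.cosh x) ^ (k-1) -
        2 * (Real.sinh (l * x) * (l * 1)) * r * (2 * Real.cosh (l * x)) ^ (r-1)) x := by
    intro x
    refine HasDerivAt.sub ?_ ?_
    · exact ((Real.hasDerivAt_cosh x).const_mul 2).rpow_const (Or.inl (by have := Real.cosh_pos x; positivity))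
    · exact ((((hasDerivAt_id x).const_mul l).cosh).const_mul 2).rpow_const (Or.inl (by have := Real.cosh_pos (l * x); simp only [id]; positivity))
  have hm : MonotoneOn (fun v => (2 * Real.cosh v) ^ k - (2 * Real.cosh (l * v)) ^ r) (Set.Ici 0) := by
    apply monotoneOn_of_deriv_nonneg (convex_Ici 0)
    · exact fun x _ => (hd x).continuousAt.continuousWithinAt
    · exact fun x _ => (hd x).differentiableAt.differentiableWithinAt
    · intro x hx
      rw [interior_Ici] at hx
      have hx0 : 0 ≤ x := le_of_lt hx
      rw [(hd x).deriv]
      have hl0 : 0 < l := by linarith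
      have hc := Real.cosh_pos x
      have hcl := Real.cosh_pos (l * x)
      have h1 := sinh_ge_A (2 / l) (l * x) (by rw [le_div_iff₀ hl0]; linarith)
        (by rw [div_le_iff₀ hl0]; linarith) (by positivity)
      rw [show 2 / l * (l * x) = 2 * x by field_simp, Real.sinh_two_mul] at h1
      have hrm : 0 ≤ r - 2 / l := by
        rw [sub_nonneg, div_le_iff₀ hl0]; linarith
      have h2 : (2 * Real.cosh (l * x)) ^ (r - 2/l) ≤ (2 * Real.cosh x) ^ (k - 2) := by
        refine (Real.rpow_le_rpow (by positivity) (cosh_pow_le l x hl) hrm).trans (le_of_eq ?_)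
        rw [← Real.rpow_mul (by positivity)]
        congr 1
        rw [hkl]; field_simp
      have hs : 0 ≤ Real.sinh x := Real.sinh_nonneg_iff.2 hx0
      have h3 : (2 * Real.cosh (l * x)) ^ (r-1) * Real.sinh (l * x) ≤ (2 * Real.cosh x) ^ (k-1) * Real.sinh x := by
        calc (2 * Real.cosh (l * x)) ^ (r-1) * Real.sinh (l * x)
            = (2 * Real.cosh (l * x)) ^ (r - 2/l) * ((2 * Real.cosh (l * x)) ^ (2/l-1) * Real.sinh (l * x)) := by
              rw [← mul_assoc, ← Real.rpow_add (by positivity)]; congr 2; ring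
          _ ≤ (2 * Real.cosh x) ^ (k-2) * (2 * Real.sinh x * Real.cosh x) := by
              refine (mul_le_mul_of_nonneg_left h1 (by positivity)).trans ?_
              exact mul_le_mul_of_nonneg_right h2 (by positivity)
          _ = (2 * Real.cosh x) ^ (k-1) * Real.sinh x := by
              rw [show k - 1 = (k-2) + 1 by ring, Real.rpow_add_one (by positivity)]; ring
      have := mul_le_mul_of_nonneg_left h3 (show 0 ≤ 2 * k by linarith)
      have e : 2 * (Real.sinh (l * x) * (l * 1)) * r * (2 * Real.cosh (l * x)) ^ (r-1)
        = 2 * k * ((2 * Real.cosh (l * x)) ^ (r-1) * Real.sinh (l * x)) := by rw [hkl]; ring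
      rw [e]
      linarith
  have := hm (Set.mem_Ici.2 le_rfl) (Set.mem_Ici.2 hv) hv
  simp at this
  linarith

theorem major (a b θ : ℝ) (ha : 2 ≤ a) (hb : 2 ≤ b) (hθ : 1 ≤ θ) :
    (2 + a) ^ θ + (2 + b) ^ θ ≤ (a + b) ^ θ + 4 ^ θ := by
  rcases eq_or_lt_of_le (show 4 ≤ a + b by linarith) with h | h
  · have : a = 2 := by linarith
    have : b = 2 := by linarith
    subst a b; norm_num
  · have hc := convexOn_rpow hθ
    have hD : 0 < a + b - 4 := by linarith
    have h1 := hc.2 (show a + b ∈ Set.Ici (0:ℝ) from by simp; linarith) (show (4:ℝ) ∈ Set.Ici (0:ℝ) by simp)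
      (show 0 ≤ (a-2)/(a+b-4) from div_nonneg (by linarith) hD.le)
      (show 0 ≤ (b-2)/(a+b-4) from div_nonneg (by linarith) hD.le) (by field_simp; ring)
    have h2 := hc.2 (show a + b ∈ Set.Ici (0:ℝ) from by simp; linarith) (show (4:ℝ) ∈ Set.Ici (0:ℝ) by simp)
      (show 0 ≤ (b-2)/(a+b-4) from div_nonneg (by linarith) hD.le)
      (show 0 ≤ (a-2)/(a+b-4) from div_nonneg (by linarith) hD.le) (by field_simp; ring)
    simp only [smul_eq_mul] at h1 h2
    rw [show (a-2)/(a+b-4) * (a+b) + (b-2)/(a+b-4) * 4 = 2 + a by field_simp; ring] at h1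
    rw [show (b-2)/(a+b-4) * (a+b) + (a-2)/(a+b-4) * 4 = 2 + b by field_simp; ring] at h2
    have e : (a-2)/(a+b-4) + (b-2)/(a+b-4) = 1 := by field_simp; ring
    generalize (a-2)/(a+b-4) = w1 at *
    generalize (b-2)/(a+b-4) = w2 at *
    have : w2 = 1 - w1 := by linarith
    subst this
    linarith

theorem cosh_ineq (k r s u t : ℝ) (hr : 1 ≤ r) (hk : 2 ≤ k) (hrk : r ≤ k) (hk2 : k ≤ 2 * r)
    (hs : s * k = 2 * r) (hkr : (2:ℝ) ^ k = 2 + 2 ^ r) :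
    2 * Real.cosh (r * u) + (2 * Real.cosh t) ^ r ≤
      (2 * Real.cosh (s * u) + 2 * Real.cosh (s * t)) ^ (k / 2) := by
  have hsq : ∀ w, (2 + 2 * Real.cosh (s * w)) ^ (k/2) = (2 * Real.cosh (s * w / 2)) ^ k := by
    intro w
    have : 2 + 2 * Real.cosh (s * w) = (2 * Real.cosh (s * w / 2)) ^ (2:ℝ) := by
      rw [Real.rpow_two]
      have := Real.cosh_two_mul (s * w / 2)
      have h2 := Real.cosh_sq (s * w / 2)
      rw [show 2 * (s * w / 2) = s * w by ring] at this
      nlinarith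
    rw [this, ← Real.rpow_mul (by have := Real.cosh_pos (s * w / 2); positivity)]
    congr 1; ring
  have h1 := diag_ineq k (s * u / 2) hk
  have h2 := anti_ineq k r (k / r) (s * t / 2) hr hk (by rw [le_div_iff₀ (by linarith)]; linarith)
    (by rw [div_le_iff₀ (by linarith)]; linarith) (by field_simp)
  have h3 := major (2 * Real.cosh (s * u)) (2 * Real.cosh (s * t)) (k/2)
    (by have := Real.one_le_cosh (s*u); linarith) (by have := Real.one_le_cosh (s*t); linarith) (by linarith)
  rw [hsq, hsq] at h3
  have h4 : (4:ℝ) ^ (k/2) = 2 ^ k := by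
    rw [show (4:ℝ) = 2 ^ (2:ℝ) by norm_num, ← Real.rpow_mul (by norm_num)]; congr 1; ring
  rw [show k * (s * u / 2) = r * u by linear_combination (u/2) * hs] at h1
  rw [show k / r * (s * t / 2) = t by
    have : r ≠ 0 := by linarith
    field_simp; linear_combination (t) * hs] at h2
  linarith

theorem two_point_pos (k r s : ℝ) (hr : 1 ≤ r) (hk : 2 ≤ k) (hrk : r ≤ k) (hk2 : k ≤ 2 * r)
    (hs : s * k = 2 * r) (hkr : (2:ℝ) ^ k = 2 + 2 ^ r) (a b c d : ℝ)
    (ha : 0 < a) (hb : 0 < b) (hc : 0 < c) (hd : 0 < d) :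
    (a * c) ^ r + (a * d + b * c) ^ r + (b * d) ^ r ≤ ((a ^ s + b ^ s) * (c ^ s + d ^ s)) ^ (k/2) := by
  obtain ⟨A, rfl⟩ : ∃ A, a = Real.exp A := ⟨_, (Real.exp_log ha).symm⟩
  obtain ⟨B, rfl⟩ : ∃ A, b = Real.exp A := ⟨_, (Real.exp_log hb).symm⟩
  obtain ⟨C, rfl⟩ : ∃ A, c = Real.exp A := ⟨_, (Real.exp_log hc).symm⟩
  obtain ⟨D, rfl⟩ : ∃ A, d = Real.exp A := ⟨_, (Real.exp_log hd).symm⟩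
  have h := cosh_ineq k r s ((A+C-B-D)/2) ((A+D-B-C)/2) hr hk hrk hk2 hs hkr
  set m := (A+B+C+D)/2 with hm
  have h5 := mul_le_mul_of_nonneg_left h (Real.exp_pos (m*r)).le
  have e1 : Real.exp A * Real.exp D + Real.exp B * Real.exp C = Real.exp m * (2 * Real.cosh ((A+D-B-C)/2)) := by
    rw [Real.cosh_eq, mul_div_cancel₀ _ (by norm_num), mul_add, ← Real.exp_add, ← Real.exp_add, ← Real.exp_add, ← Real.exp_add]
    congr 2 <;> (rw [hm]; ring)
  have e2 : (Real.exp A * Real.exp C)^r + (Real.exp B * Real.exp D)^r = Real.exp (m*r) * (2 * Real.cosh (r*((A+C-B-D)/2))) := by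
    rw [Real.cosh_eq, mul_div_cancel₀ _ (by norm_num), mul_add, ← Real.exp_add, ← Real.exp_add, ← Real.exp_add, ← Real.exp_add, ← Real.exp_mul, ← Real.exp_mul]
    congr 2 <;> (rw [hm]; ring)
  have e3 : ((Real.exp A)^s + (Real.exp B)^s) * ((Real.exp C)^s + (Real.exp D)^s) =
      Real.exp (m*s) * (2 * Real.cosh (s * ((A+C-B-D)/2)) + 2 * Real.cosh (s * ((A+D-B-C)/2))) := by
    rw [Real.cosh_eq, Real.cosh_eq, mul_div_cancel₀ _ (by norm_num), mul_div_cancel₀ _ (by norm_num)]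
    simp only [← Real.exp_mul, mul_add, add_mul, ← Real.exp_add]
    rw [hm]
    ring_nf
  have p1 := Real.cosh_pos (s * ((A+C-B-D)/2))
  have p2 := Real.cosh_pos (s * ((A+D-B-C)/2))
  have p3 := Real.cosh_pos ((A+D-B-C)/2)
  rw [e3, e1, add_right_comm, e2, Real.mul_rpow (Real.exp_pos _).le (by positivity),
    Real.mul_rpow (Real.exp_pos _).le (by positivity), ← Real.exp_mul, ← Real.exp_mul, show m * s * (k/2) = m * r by linear_combination m/2*hs]
  linarith

theorem two_point (k r s : ℝ) (hr : 1 ≤ r) (hk : 2 ≤ k) (hrk : r ≤ k) (hk2 : k ≤ 2 * r)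
    (hs : s * k = 2 * r) (hkr : (2:ℝ) ^ k = 2 + 2 ^ r) (a b c d : ℝ)
    (ha : 0 ≤ a) (hb : 0 ≤ b) (hc : 0 ≤ c) (hd : 0 ≤ d) :
    (a * c) ^ r + (a * d + b * c) ^ r + (b * d) ^ r ≤ ((a ^ s + b ^ s) * (c ^ s + d ^ s)) ^ (k/2) := by
  have hs0 : 0 ≤ s := by
    by_contra h
    push Not at h
    nlinarith
  have hr0 : 0 ≤ r := by linarith
  have hk0 : 0 ≤ k / 2 := by linarith
  have c1 : Continuous (fun e : ℝ => ((a+e) * (c+e)) ^ r + ((a+e) * (d+e) + (b+e) * (c+e)) ^ r + ((b+e) * (d+e)) ^ r) := by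
    refine Continuous.add (Continuous.add ?_ ?_) ?_ <;>
      exact Continuous.rpow_const (by fun_prop) (fun _ => Or.inr hr0)
  have c2 : Continuous (fun e : ℝ => (((a+e) ^ s + (b+e) ^ s) * ((c+e) ^ s + (d+e) ^ s)) ^ (k/2)) := by
    refine Continuous.rpow_const (Continuous.mul (Continuous.add ?_ ?_) (Continuous.add ?_ ?_)) (fun _ => Or.inr hk0) <;>
      exact Continuous.rpow_const (by fun_prop) (fun _ => Or.inr hs0)
  have t1 := (c1.tendsto 0).mono_left (nhdsWithin_le_nhds (s := Set.Ioi (0:ℝ)))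
  have t2 := (c2.tendsto 0).mono_left (nhdsWithin_le_nhds (s := Set.Ioi (0:ℝ)))
  have := le_of_tendsto_of_tendsto t1 t2 (by
    filter_upwards [self_mem_nhdsWithin] with e he
    have he : 0 < e := he
    exact two_point_pos k r s hr hk hrk hk2 hs hkr _ _ _ _ (by linarith) (by linarith) (by linarith) (by linarith))
  simpa using this

noncomputable def fconv {d : ℕ} (F G : (Fin d → Fin 2) → ℝ) (m : Fin d → Fin 3) : ℝ :=
  ∑ u, ∑ v, if (∀ i, (u i : ℕ) + (v i : ℕ) = (m i : ℕ)) then F u * G v else 0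

theorem sum_cons {n : ℕ} {α : Type} [Fintype α] (Φ : (Fin (n+1) → α) → ℝ) :
    ∑ u, Φ u = ∑ a, ∑ u : Fin n → α, Φ (Fin.cons a u) := by
  rw [← Fintype.sum_prod_type' (f := fun a (u : Fin n → α) => Φ (Fin.cons a u))]
  exact (Fintype.sum_equiv (Fin.consEquiv (fun _ : Fin (n+1) => α)) _ _ (fun x => rfl)).symm

theorem fconv_nonneg {d : ℕ} (F G : (Fin d → Fin 2) → ℝ) (hF : ∀ u, 0 ≤ F u) (hG : ∀ u, 0 ≤ G u) (m) :
    0 ≤ fconv F G m := by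
  refine Finset.sum_nonneg fun u _ => Finset.sum_nonneg fun v _ => ?_
  split_ifs
  · exact mul_nonneg (hF u) (hG v)
  · exact le_rfl

theorem fconv_cons {n : ℕ} (F G : (Fin (n+1) → Fin 2) → ℝ) (m : Fin n → Fin 3) :
    fconv F G (Fin.cons 0 m) = fconv (fun u => F (Fin.cons 0 u)) (fun u => G (Fin.cons 0 u)) m ∧
    fconv F G (Fin.cons 1 m) = fconv (fun u => F (Fin.cons 0 u)) (fun u => G (Fin.cons 1 u)) m
      + fconv (fun u => F (Fin.cons 1 u)) (fun u => G (Fin.cons 0 u)) m ∧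
    fconv F G (Fin.cons 2 m) = fconv (fun u => F (Fin.cons 1 u)) (fun u => G (Fin.cons 1 u)) m := by
  unfold fconv
  refine ⟨?_, ?_, ?_⟩ <;>
    simp [sum_cons, Fin.sum_univ_two, Fin.forall_fin_succ, Finset.sum_add_distrib, add_comm]

theorem fyoung (k r s : ℝ) (hr : 1 ≤ r) (hk : 2 ≤ k) (hrk : r ≤ k) (hk2 : k ≤ 2 * r)
    (hs : s * k = 2 * r) (hkr : (2:ℝ) ^ k = 2 + 2 ^ r) (d : ℕ) :
    ∀ F G : (Fin d → Fin 2) → ℝ, (∀ u, 0 ≤ F u) → (∀ u, 0 ≤ G u) →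
    ∑ m, (fconv F G m) ^ r ≤ ((∑ u, F u ^ s) * (∑ u, G u ^ s)) ^ (k/2) := by
  have hs0 : 0 < s := by
    by_contra h
    push Not at h
    nlinarith
  have hr0 : 0 < r := by linarith
  induction d with
  | zero =>
    intro F G hF hG
    simp only [fconv, Finset.univ_unique, Finset.sum_singleton]
    rw [← Real.mul_rpow (hF _) (hG _), ← Real.rpow_mul (mul_nonneg (hF _) (hG _))]
    simp only [IsEmpty.forall_iff, if_true]
    rw [show s * (k/2) = r by linarith]
  | succ n ih =>
    intro F G hF hG
    rw [sum_cons, sum_cons (fun u => F u ^ s), sum_cons (fun u => G u ^ s), Fin.sum_univ_three,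
      Fin.sum_univ_two, Fin.sum_univ_two]
    simp only [(fconv_cons F G _).1, (fconv_cons F G _).2.1, (fconv_cons F G _).2.2]
    have hF0 : ∀ u : Fin n → Fin 2, 0 ≤ F (Fin.cons 0 u) := fun u => hF _
    have hF1 : ∀ u : Fin n → Fin 2, 0 ≤ F (Fin.cons 1 u) := fun u => hF _
    have hG0 : ∀ u : Fin n → Fin 2, 0 ≤ G (Fin.cons 0 u) := fun u => hG _
    have hG1 : ∀ u : Fin n → Fin 2, 0 ≤ G (Fin.cons 1 u) := fun u => hG _
    have key : ∀ P Q : (Fin n → Fin 2) → ℝ, (∀ u, 0 ≤ P u) → (∀ u, 0 ≤ Q u) →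
        ∑ m, (fconv P Q m) ^ r ≤ ((∑ u, P u ^ s) ^ (1/s) * (∑ u, Q u ^ s) ^ (1/s)) ^ r := by
      intro P Q hP hQ
      refine (ih P Q hP hQ).trans (le_of_eq ?_)
      have a1 : 0 ≤ ∑ u, P u ^ s := Finset.sum_nonneg fun u _ => Real.rpow_nonneg (hP u) _
      have a2 : 0 ≤ ∑ u, Q u ^ s := Finset.sum_nonneg fun u _ => Real.rpow_nonneg (hQ u) _
      rw [← Real.mul_rpow a1 a2, ← Real.rpow_mul (mul_nonneg a1 a2)]
      congr 1
      field_simp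
      linarith
    have hP : ∀ P : (Fin n → Fin 2) → ℝ, (∀ u, 0 ≤ P u) → 0 ≤ (∑ u, P u ^ s) ^ (1/s) ∧
        ((∑ u, P u ^ s) ^ (1/s)) ^ s = ∑ u, P u ^ s := by
      intro P hP
      have a1 : 0 ≤ ∑ u, P u ^ s := Finset.sum_nonneg fun u _ => Real.rpow_nonneg (hP u) _
      refine ⟨Real.rpow_nonneg a1 _, ?_⟩
      rw [← Real.rpow_mul a1, one_div_mul_cancel hs0.ne', Real.rpow_one]
    have main : ∀ P0 P1 Q0 Q1 : (Fin n → Fin 2) → ℝ, (∀ u, 0 ≤ P0 u) → (∀ u, 0 ≤ P1 u) →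
        (∀ u, 0 ≤ Q0 u) → (∀ u, 0 ≤ Q1 u) →
        ∑ m, (fconv P0 Q0 m) ^ r + ∑ m, (fconv P0 Q1 m + fconv P1 Q0 m) ^ r + ∑ m, (fconv P1 Q1 m) ^ r
        ≤ ((∑ u, P0 u ^ s + ∑ u, P1 u ^ s) * (∑ u, Q0 u ^ s + ∑ u, Q1 u ^ s)) ^ (k/2) := by
      intro P0 P1 Q0 Q1 h0 h1 g0 g1
      obtain ⟨p0, e0⟩ := hP P0 h0
      obtain ⟨p1, e1⟩ := hP P1 h1
      obtain ⟨q0, f0⟩ := hP Q0 g0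
      obtain ⟨q1, f1⟩ := hP Q1 g1
      have k00 := key P0 Q0 h0 g0
      have k01 := key P0 Q1 h0 g1
      have k10 := key P1 Q0 h1 g0
      have k11 := key P1 Q1 h1 g1
      have tp := two_point k r s hr hk hrk hk2 hs hkr _ _ _ _ p0 p1 q0 q1
      rw [e0, e1, f0, f1] at tp
      generalize (∑ u, P0 u ^ s) ^ (1/s) = a at *
      generalize (∑ u, P1 u ^ s) ^ (1/s) = b at *
      generalize (∑ u, Q0 u ^ s) ^ (1/s) = c at *
      generalize (∑ u, Q1 u ^ s) ^ (1/s) = e at *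
      have mk := Real.Lp_add_le_of_nonneg (s := Finset.univ) hr (f := fconv P0 Q1) (g := fconv P1 Q0)
        (fun i _ => fconv_nonneg _ _ h0 g1 i) (fun i _ => fconv_nonneg _ _ h1 g0 i)
      have n01 : 0 ≤ ∑ m, (fconv P0 Q1 m) ^ r := Finset.sum_nonneg fun m _ => Real.rpow_nonneg (fconv_nonneg _ _ h0 g1 m) _
      have n10 : 0 ≤ ∑ m, (fconv P1 Q0 m) ^ r := Finset.sum_nonneg fun m _ => Real.rpow_nonneg (fconv_nonneg _ _ h1 g0 m) _
      have nn : 0 ≤ ∑ m, (fconv P0 Q1 m + fconv P1 Q0 m) ^ r := Finset.sum_nonneg fun m _ =>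
        Real.rpow_nonneg (add_nonneg (fconv_nonneg _ _ h0 g1 m) (fconv_nonneg _ _ h1 g0 m)) _
      have k01' : (∑ m, (fconv P0 Q1 m) ^ r) ^ (1/r) ≤ a * e := by
        rw [one_div]
        exact (Real.rpow_inv_le_iff_of_pos n01 (mul_nonneg p0 q1) hr0).2 k01
      have k10' : (∑ m, (fconv P1 Q0 m) ^ r) ^ (1/r) ≤ b * c := by
        rw [one_div]
        exact (Real.rpow_inv_le_iff_of_pos n10 (mul_nonneg p1 q0) hr0).2 k10
      have mk2 : ∑ m, (fconv P0 Q1 m + fconv P1 Q0 m) ^ r ≤ (a * e + b * c) ^ r := by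
        rw [one_div] at mk k01' k10'
        exact (Real.rpow_inv_le_iff_of_pos nn (add_nonneg (mul_nonneg p0 q1) (mul_nonneg p1 q0)) hr0).1 (by linarith)
      linarith
    exact main (fun u => F (Fin.cons 0 u)) (fun u => F (Fin.cons 1 u)) (fun u => G (Fin.cons 0 u))
      (fun u => G (Fin.cons 1 u)) hF0 hF1 hG0 hG1

theorem holder_interp {ι : Type} [Fintype ι] (F : ι → ℝ) (hF : ∀ u, 0 ≤ F u) (p q s : ℝ) (hp : 0 < p) (hq : 0 < q)
    (hs : 0 < s) (h : 1 / p + 1 / q = 2 / s) :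
    (∑ u, F u ^ s) ^ (2 / s) ≤ (∑ u, F u ^ p) ^ (1/p) * (∑ u, F u ^ q) ^ (1/q) := by
  have hc : (2 * p / s).HolderConjugate (2 * q / s) := by
    refine ⟨?_, by positivity, by positivity⟩
    have : (2 * p / s)⁻¹ + (2 * q / s)⁻¹ = s / 2 * (1 / p + 1 / q) := by field_simp
    rw [this, h]; field_simp
  have a0 : ∀ t : ℝ, 0 ≤ ∑ u, F u ^ t := fun t => Finset.sum_nonneg fun u _ => Real.rpow_nonneg (hF u) _
  have := Real.inner_le_Lp_mul_Lq_of_nonneg Finset.univ hc (f := fun u => F u ^ (s/2)) (g := fun u => F u ^ (s/2))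
    (fun u _ => Real.rpow_nonneg (hF u) _) (fun u _ => Real.rpow_nonneg (hF u) _)
  have e1 : ∀ t : ℝ, ∀ u, (F u ^ (s/2)) ^ (2 * t / s) = F u ^ t := by
    intro t u
    rw [← Real.rpow_mul (hF u)]; congr 1; field_simp
  have e2 : ∀ u, F u ^ (s/2) * F u ^ (s/2) = F u ^ s := by
    intro u
    rw [← Real.rpow_add_of_nonneg (hF u) (by positivity) (by positivity)]; congr 1; ring
  simp only [e1, e2] at this
  have h2 := Real.rpow_le_rpow (a0 s) this (show 0 ≤ 2 / s by positivity)
  refine h2.trans (le_of_eq ?_)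
  rw [Real.mul_rpow (Real.rpow_nonneg (a0 _) _) (Real.rpow_nonneg (a0 _) _), ← Real.rpow_mul (a0 _), ← Real.rpow_mul (a0 _)]
  congr 2 <;> field_simp

def emb {d n : ℕ} (u : Fin d → Fin n) : Fin d → ℤ := fun i => ((u i : ℕ) : ℤ)

theorem emb_inj {d n : ℕ} : Function.Injective (emb : (Fin d → Fin n) → Fin d → ℤ) := by
  intro u v h
  funext i
  have := congrFun h i
  simp only [emb] at this
  exact Fin.ext (by exact_mod_cast this)

theorem emb_inCube {d : ℕ} (u : Fin d → Fin 2) : InCube (emb u) := by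
  intro i
  simp only [emb]
  have := (u i).2
  omega

theorem mem_range_emb {d : ℕ} (n : ℕ) (x : Fin d → ℤ) (h : ∀ i, 0 ≤ x i ∧ x i < n) :
    ∃ u : Fin d → Fin n, emb u = x := by
  refine ⟨fun i => ⟨(x i).toNat, by have := h i; omega⟩, ?_⟩
  funext i
  have := h i
  simp only [emb]
  omega

theorem tsum_emb {d n : ℕ} (Φ : (Fin d → ℤ) → ℝ)
    (h : ∀ x, Φ x ≠ 0 → ∀ i, 0 ≤ x i ∧ x i < n) :
    ∑' x, Φ x = ∑ u : Fin d → Fin n, Φ (emb u) := by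
  have hs : Function.support Φ ⊆ Set.range (emb : (Fin d → Fin n) → Fin d → ℤ) := by
    intro x hx
    exact mem_range_emb n x (h x hx)
  rw [← emb_inj.tsum_eq hs]
  exact tsum_fintype _

theorem inCube_bd {d : ℕ} {x : Fin d → ℤ} (h : InCube x) (i : Fin d) : 0 ≤ x i ∧ x i < (2:ℕ) := by
  have := h i
  push_cast
  omega

theorem cconv_emb {d : ℕ} (f : (Fin d → ℤ) → ℝ) (hf : SupportedInCube f) (x : Fin d → ℤ) :
    cconv f f x = ∑ u : Fin d → Fin 2, f (emb u) * f (x - emb u) := by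
  unfold cconv
  refine tsum_emb (fun u => f u * f (x - u)) ?_
  intro u hu
  refine inCube_bd ?_
  by_contra hc
  exact hu (by simp [hf u hc])

theorem cconv_supp {d : ℕ} (f : (Fin d → ℤ) → ℝ) (hf : SupportedInCube f) (x : Fin d → ℤ)
    (hx : cconv f f x ≠ 0) (i : Fin d) : 0 ≤ x i ∧ x i < (3:ℕ) := by
  rw [cconv_emb f hf] at hx
  obtain ⟨u, -, hu⟩ := Finset.exists_ne_zero_of_sum_ne_zero hx
  have h1 : InCube (x - emb u) := by
    by_contra hc
    exact hu (by simp [hf _ hc])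
  have h1 := inCube_bd h1 i
  have h2 := inCube_bd (emb_inCube u) i
  simp only [Pi.sub_apply] at h1
  push_cast at *
  omega

theorem cconv_le {d : ℕ} (f : (Fin d → ℤ) → ℝ) (hf : SupportedInCube f) (m : Fin d → Fin 3) :
    |cconv f f (emb m)| ≤ fconv (fun u => |f (emb u)|) (fun u => |f (emb u)|) m := by
  rw [cconv_emb f hf]
  refine (Finset.abs_sum_le_sum_abs _ _).trans ?_
  unfold fconv
  refine Finset.sum_le_sum fun u _ => ?_
  have hnn : ∀ v ∈ (Finset.univ : Finset (Fin d → Fin 2)),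
      0 ≤ if (∀ i, (u i : ℕ) + (v i : ℕ) = (m i : ℕ)) then |f (emb u)| * |f (emb v)| else 0 := by
    intro v _
    split_ifs
    · positivity
    · exact le_rfl
  rw [abs_mul]
  by_cases hc : InCube (emb m - emb u)
  · obtain ⟨v, hv⟩ := mem_range_emb 2 _ (inCube_bd hc)
    refine le_trans (le_of_eq ?_) (Finset.single_le_sum hnn (Finset.mem_univ v))
    rw [if_pos, hv]
    intro i
    have := congrFun hv i
    simp only [emb, Pi.sub_apply] at this
    omega
  · rw [hf _ hc, abs_zero, mul_zero]
    exact Finset.sum_nonneg hnn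

theorem young_hypercube_self_offdiagonal (d : ℕ) (hd : 1 ≤ d) (r : ℝ) (hr : 1 ≤ r)
    (p q : ℝ≥0∞) (hp : 1 ≤ p) (hq : 1 ≤ q)
    (hpq : 1 / p + 1 / q = ENNReal.ofReal (Real.logb 2 (2 + 2 ^ r) / r))
    (f : (Fin d → ℤ) → ℝ) (hf : SupportedInCube f) :
    lnorm r (cconv f f) ≤ lnormE p f * lnormE q f := by
  set k := Real.logb 2 (2 + 2 ^ r) with hkdef
  have hr0 : 0 < r := by linarith
  have h2r : (2:ℝ) ≤ 2 ^ r := by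
    have := Real.rpow_le_rpow_of_exponent_le (show (1:ℝ) ≤ 2 by norm_num) hr
    rwa [Real.rpow_one] at this
  have hkr : (2:ℝ) ^ k = 2 + 2 ^ r := Real.rpow_logb (by norm_num) (by norm_num) (by linarith)
  have h2 : (1:ℝ) < 2 := by norm_num
  have hk : 2 ≤ k := by
    rw [← Real.rpow_le_rpow_left_iff h2, hkr, Real.rpow_two]; linarith
  have hrk : r < k := by
    rw [← Real.rpow_lt_rpow_left_iff h2, hkr]; linarith
  have hk2 : k ≤ 2 * r := by
    rw [← Real.rpow_le_rpow_left_iff h2, hkr, two_mul, Real.rpow_add (by norm_num)]; nlinarith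
  have hk0 : 0 < k := by linarith
  have hkr1 : 1 < k / r := by rw [lt_div_iff₀ hr0]; linarith
  have hnt : ∀ p q : ℝ≥0∞, 1 ≤ q → 1 / p + 1 / q = ENNReal.ofReal (k / r) → p ≠ ∞ := by
    rintro p q hq hpq rfl
    have h1 : 1 / q ≤ 1 := by
      rw [one_div]; exact ENNReal.inv_le_one.2 hq
    rw [ENNReal.div_top, zero_add] at hpq
    rw [hpq, ENNReal.ofReal_le_one] at h1
    linarith
  have hpt := hnt p q hq hpq
  have hqt := hnt q p hp (by rw [add_comm]; exact hpq)
  have hp0 : p ≠ 0 := (lt_of_lt_of_le zero_lt_one hp).ne'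
  have hq0 : q ≠ 0 := (lt_of_lt_of_le zero_lt_one hq).ne'
  have hP : 0 < p.toReal := ENNReal.toReal_pos hp0 hpt
  have hQ : 0 < q.toReal := ENNReal.toReal_pos hq0 hqt
  have hPQ : 1 / p.toReal + 1 / q.toReal = 2 / (2 * r / k) := by
    have := congrArg ENNReal.toReal hpq
    rw [ENNReal.toReal_add (by simpa using hp0) (by simpa using hq0),
      ENNReal.toReal_ofReal (by positivity)] at this
    simp only [one_div, ENNReal.toReal_inv] at this ⊢
    rw [this]; field_simp
  have hs0 : 0 < 2 * r / k := by positivity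
  have hF : ∀ u : Fin d → Fin 2, 0 ≤ |f (emb u)| := fun u => abs_nonneg _
  have hn : ∀ t : ℝ, 0 < t → ∑' x, |f x| ^ t = ∑ u : Fin d → Fin 2, |f (emb u)| ^ t := by
    intro t ht
    refine tsum_emb (fun x => |f x| ^ t) ?_
    intro x hx
    refine inCube_bd ?_
    by_contra hc
    exact hx (by simp [hf x hc, ht.ne'])
  have hl : ∑' x, |cconv f f x| ^ r = ∑ m : Fin d → Fin 3, |cconv f f (emb m)| ^ r := by
    refine tsum_emb (fun x => |cconv f f x| ^ r) ?_
    intro x hx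
    refine cconv_supp f hf x ?_
    intro hc
    exact hx (by simp [hc, hr0.ne'])
  unfold lnorm lnormE
  rw [if_neg hpt, if_neg hqt, hn _ hP, hn _ hQ, hl]
  refine le_trans ?_ (holder_interp (fun u => |f (emb u)|) hF p.toReal q.toReal (2 * r / k) hP hQ hs0 hPQ)
  have hy := fyoung k r (2 * r / k) hr hk hrk.le hk2 (by field_simp) hkr d _ _ hF hF
  have h1 : ∑ m : Fin d → Fin 3, |cconv f f (emb m)| ^ r ≤
      ∑ m, fconv (fun u => |f (emb u)|) (fun u => |f (emb u)|) m ^ r :=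
    Finset.sum_le_sum fun m _ => Real.rpow_le_rpow (abs_nonneg _) (cconv_le f hf m) hr0.le
  have h0 : 0 ≤ ∑ m : Fin d → Fin 3, |cconv f f (emb m)| ^ r :=
    Finset.sum_nonneg fun m _ => Real.rpow_nonneg (abs_nonneg _) _
  have h3 := Real.rpow_le_rpow h0 (h1.trans hy) (show 0 ≤ 1 / r by positivity)
  refine h3.trans (le_of_eq ?_)
  have hS : 0 ≤ ∑ u : Fin d → Fin 2, |f (emb u)| ^ (2 * r / k) :=
    Finset.sum_nonneg fun m _ => Real.rpow_nonneg (abs_nonneg _) _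
  generalize ∑ u : Fin d → Fin 2, |f (emb u)| ^ (2 * r / k) = S at hS
  rw [← pow_two, ← Real.rpow_natCast, ← Real.rpow_mul hS, ← Real.rpow_mul hS]
  congr 1
  push_cast
  field_simp
end

section
/- Let 1 ≤ p, q ≤ ∞ satisfy 1/p + 1/q = (log₂ 6)/2. Then the inequality ‖f*g‖_{ℓ^2(ℤ^d)} ≤ ‖f‖_{ℓ^p(ℤ^d)} ‖g‖_{ℓ^q(ℤ^d)} holds for every d ≥ 1 and all f, g : ℤ^d → ℝ supported in {0,1}^d if and only if 4/3 ≤ p, q ≤ 1 / ( (log₂ 3)/2 − 1/4 ). -/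
open scoped BigOperators ENNReal

lemma yh_cross {s u v : ℝ} (hs : s < 1) (hu : 0 < u) (huv : u < v) (hv : v < 1)
    (h1 : (1 - s) + u*(1-2*u-u^2-2*u^3+u^4)/((1+u+u^3)*(1+u^2+u^3)) < 0)
    (h2 : 0 < (1 - s) + v*(1-2*v-v^2-2*v^3+v^4)/((1+v+v^3)*(1+v^2+v^3))) : False := by
  have key : ∀ t : ℝ, 0 < t → t*(1-2*t-t^2-2*t^3+t^4)/((1+t+t^3)*(1+t^2+t^3))
      = ((t+1/t)-3)*((t+1/t)+1)/((t+1/t)^3+(t+1/t)^2-2*(t+1/t)+1) := by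
    intro t ht
    have e : (t+1/t)^3+(t+1/t)^2-2*(t+1/t)+1 = ((1+t+t^3)*(1+t^2+t^3))/t^3 := by
      field_simp; ring
    have e2 : ((t+1/t)-3)*((t+1/t)+1) = (1-2*t-t^2-2*t^3+t^4)/t^2 := by
      field_simp; ring
    rw [e, e2]
    have : 0 < (1+t+t^3)*(1+t^2+t^3) := by positivity
    field_simp
  have hv0 : 0 < v := hu.trans huv
  rw [key u hu] at h1
  rw [key v hv0] at h2
  have z2 : ∀ t : ℝ, 0 < t → 2 ≤ t + 1/t := by
    intro t ht
    have : t + 1/t - 2 = (t-1)^2/t := by field_simp; ring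
    have : 0 ≤ (t-1)^2/t := by positivity
    linarith
  have hz : v + 1/v ≤ u + 1/u := by
    have : (u + 1/u) - (v+1/v) = (v-u)*(1-u*v)/(u*v) := by field_simp; ring
    have h3 : 0 ≤ (v-u)*(1-u*v)/(u*v) := by
      have : u*v ≤ 1 := by nlinarith
      apply div_nonneg (mul_nonneg (by linarith) (by linarith)) (by positivity)
    linarith
  have a2 := z2 u hu
  have b2 := z2 v hv0
  generalize u + 1/u = a at *
  generalize v + 1/v = b at *
  have da : 0 < a^3+a^2-2*a+1 := by nlinarith [mul_nonneg (sub_nonneg.2 a2) (sq_nonneg a)]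
  have db : 0 < b^3+b^2-2*b+1 := by nlinarith [mul_nonneg (sub_nonneg.2 b2) (sq_nonneg b)]
  have ha3 : a < 3 := by
    by_contra hh
    have : 0 ≤ (a-3)*(a+1)/(a^3+a^2-2*a+1) :=
      div_nonneg (mul_nonneg (by linarith) (by linarith)) da.le
    linarith
  have : (b-3)*(b+1)/(b^3+b^2-2*b+1) ≤ (a-3)*(a+1)/(a^3+a^2-2*a+1) := by
    rw [div_le_div_iff₀ db da]
    have n1 : (3-a)*(a+1) ≤ (3-b)*(b+1) := by nlinarith
    have n2 : b^3+b^2-2*b+1 ≤ a^3+a^2-2*a+1 := by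
      have : a^3+a^2-2*a+1 - (b^3+b^2-2*b+1) = (a-b)*(a^2+a*b+b^2+a+b-2) := by ring
      have : 0 ≤ (a-b)*(a^2+a*b+b^2+a+b-2) := mul_nonneg (by linarith) (by nlinarith)
      linarith
    have n0 : 0 ≤ (3-a)*(a+1) := mul_nonneg (by linarith) (by linarith)
    have := mul_le_mul n1 n2 db.le (n0.trans n1)
    linarith
  linarith

lemma yh_onevar {s : ℝ} (hs0 : 0 < s) (hs : s < 1)
    (h2 : (1/s) * Real.log 2 = Real.log 3 - (1/2) * Real.log 2) {t : ℝ} (ht0 : 0 ≤ t) (ht1 : t ≤ 1) :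
    Real.log (1+t+t^2) - (1/2) * Real.log (1+t^2) ≤ (1/s) * Real.log (1+t^s) := by
  by_contra hcon
  push Not at hcon
  set h : ℝ → ℝ := fun t => (1/s) * Real.log (1+t^s) - Real.log (1+t+t^2) + (1/2) * Real.log (1+t^2) with hh
  set K : ℝ → ℝ := fun t => Real.log (1+t+t^3) - Real.log (1+t^2+t^3) + (1-s) * Real.log t with hK
  have hh0 : h 0 = 0 := by simp [hh, Real.zero_rpow hs0.ne']
  have hh1 : h 1 = 0 := by
    simp only [hh, Real.one_rpow, one_pow]; norm_num; norm_num at h2; linarith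
  have hK1 : K 1 = 0 := by simp [hK]
  have hneg : h t < 0 := by simp only [hh]; linarith
  have t0 : 0 < t := lt_of_le_of_ne ht0 (by rintro rfl; linarith)
  have t1 : t < 1 := lt_of_le_of_ne ht1 (by rintro rfl; linarith)
  have hcont : ContinuousOn h (Set.Icc 0 1) := by
    intro x hx
    have hx0 : 0 ≤ x := hx.1
    have p1 : 1 + x^s ≠ 0 := by have := Real.rpow_nonneg hx0 s; positivity
    have p2 : 1+x+x^2 ≠ 0 := by positivity
    have p3 : 1+x^2 ≠ 0 := by positivity
    have c1 : ContinuousAt (fun x : ℝ => x^s) x := Real.continuousAt_rpow_const x s (Or.inr hs0.le)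
    apply ContinuousAt.continuousWithinAt
    simp only [hh]
    refine ContinuousAt.add (ContinuousAt.sub ?_ ?_) ?_
    · exact continuousAt_const.mul ((continuousAt_const.add c1).log p1)
    · exact ContinuousAt.log (by fun_prop) p2
    · exact continuousAt_const.mul (ContinuousAt.log (by fun_prop) p3)
  have hder : ∀ x : ℝ, 0 < x → HasDerivAt h ((1/s)*((s*x^(s-1))/(1+x^s)) - (1+2*x)/(1+x+x^2) + (1/2)*((2*x)/(1+x^2))) x := by
    intro x hx0
    have p1 : 1 + x^s ≠ 0 := by have := Real.rpow_nonneg hx0.le s; positivity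
    have p2 : 1+x+x^2 ≠ 0 := by positivity
    have p3 : 1+x^2 ≠ 0 := by positivity
    have d1 : HasDerivAt (fun x : ℝ => 1 + x^s) (s*x^(s-1)) x :=
      (Real.hasDerivAt_rpow_const (Or.inl hx0.ne')).const_add 1
    have d2 : HasDerivAt (fun x : ℝ => 1+x+x^2) (1+2*x) x := by
      have := ((hasDerivAt_id x).const_add 1).fun_add (hasDerivAt_pow 2 x)
      simpa using this
    have d3 : HasDerivAt (fun x : ℝ => 1+x^2) (2*x) x := by
      have := (hasDerivAt_pow 2 x).const_add 1
      simpa using this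
    exact (((d1.log p1).const_mul (1/s)).sub (d2.log p2)).add ((d3.log p3).const_mul (1/2))
  have hKder : ∀ x : ℝ, 0 < x → HasDerivAt K ((1+3*x^2)/(1+x+x^3) - (2*x+3*x^2)/(1+x^2+x^3) + (1-s)*(x⁻¹)) x := by
    intro x hx0
    have p2 : 1+x+x^3 ≠ 0 := by positivity
    have p3 : 1+x^2+x^3 ≠ 0 := by positivity
    have d2 : HasDerivAt (fun x : ℝ => 1+x+x^3) (1+3*x^2) x := by
      have := ((hasDerivAt_id x).const_add 1).fun_add (hasDerivAt_pow 3 x)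
      simpa using this
    have d3 : HasDerivAt (fun x : ℝ => 1+x^2+x^3) (2*x+3*x^2) x := by
      have := ((hasDerivAt_pow 2 x).const_add 1).fun_add (hasDerivAt_pow 3 x)
      simpa using this
    exact ((d2.log p2).sub (d3.log p3)).add ((Real.hasDerivAt_log hx0.ne').const_mul (1-s))
  -- sign relation
  have hrel : ∀ x : ℝ, 0 < x → ∃ c : ℝ, 0 < c ∧
      (1/s)*((s*x^(s-1))/(1+x^s)) - (1+2*x)/(1+x+x^2) + (1/2)*((2*x)/(1+x^2))
      = c * (1 - Real.exp (K x)) := by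
    intro x hx
    have hxs := Real.rpow_pos_of_pos hx s
    have e1 : x^(s-1) = x^s / x := by rw [Real.rpow_sub_one hx.ne']
    have e2 : Real.exp (K x) = (1+x+x^3)/(1+x^2+x^3) * (x / x^s) := by
      simp only [hK]
      rw [Real.exp_add, Real.exp_sub, Real.exp_log (by positivity), Real.exp_log (by positivity),
        mul_comm (1-s), ← Real.rpow_def_of_pos hx, Real.rpow_sub hx, Real.rpow_one]
    refine ⟨x^s*(1+x^2+x^3)/(x*(1+x^s)*(1+x+x^2)*(1+x^2)), by positivity, ?_⟩
    rw [e1, e2]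
    generalize x^s = y at *
    field_simp
    ring
  have hKrel : ∀ x : ℝ, 0 < x → x * ((1+3*x^2)/(1+x+x^3) - (2*x+3*x^2)/(1+x^2+x^3) + (1-s)*(x⁻¹))
      = (1 - s) + x*(1-2*x-x^2-2*x^3+x^4)/((1+x+x^3)*(1+x^2+x^3)) := by
    intro x hx
    field_simp
    ring
  obtain ⟨a, ⟨ha0, hat⟩, ha⟩ := exists_hasDerivAt_eq_slope h _ t0
    (hcont.mono (Set.Icc_subset_Icc le_rfl ht1)) (fun x hx => hder x hx.1)
  obtain ⟨b, ⟨hbt, hb1⟩, hb⟩ := exists_hasDerivAt_eq_slope h _ t1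
    (hcont.mono (Set.Icc_subset_Icc ht0 le_rfl)) (fun x hx => hder x (t0.trans hx.1))
  have hb0 : 0 < b := t0.trans hbt
  have hKa : 0 < K a := by
    obtain ⟨c, hc, e⟩ := hrel a ha0
    have : (h t - h 0)/(t-0) < 0 := div_neg_of_neg_of_pos (by linarith) (by linarith)
    rw [← ha, e] at this
    by_contra hle
    have : Real.exp (K a) ≤ 1 := Real.exp_le_one_iff.2 (not_lt.1 hle)
    nlinarith
  have hKb : K b < 0 := by
    obtain ⟨c, hc, e⟩ := hrel b hb0
    have : 0 < (h 1 - h t)/(1-t) := div_pos (by linarith) (by linarith)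
    rw [← hb, e] at this
    by_contra hle
    have : 1 ≤ Real.exp (K b) := Real.one_le_exp (not_lt.1 hle)
    nlinarith
  have hKcont : ∀ x y : ℝ, 0 < x → ContinuousOn K (Set.Icc x y) := fun x y hx z hz =>
    (hKder z (hx.trans_le hz.1)).continuousAt.continuousWithinAt
  obtain ⟨u, ⟨hu0, hu1⟩, hu⟩ := exists_hasDerivAt_eq_slope K _ (hat.trans hbt)
    (hKcont a b ha0) (fun x hx => hKder x (ha0.trans hx.1))
  obtain ⟨v, ⟨hv0, hv1⟩, hv⟩ := exists_hasDerivAt_eq_slope K _ hb1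
    (hKcont b 1 hb0) (fun x hx => hKder x (hb0.trans hx.1))
  have u0 : 0 < u := ha0.trans hu0
  have v0 : 0 < v := hb0.trans hv0
  refine yh_cross hs u0 (hu1.trans hv0) hv1 ?_ ?_
  · rw [← hKrel u u0, hu]
    exact mul_neg_of_pos_of_neg u0 (div_neg_of_neg_of_pos (by linarith) (by linarith))
  · rw [← hKrel v v0, hv]
    exact mul_pos v0 (div_pos (by linarith) (by linarith))

lemma yh_hom_aux {s : ℝ} (hs0 : 0 < s) (hs : s < 1)
    (h2 : (1/s) * Real.log 2 = Real.log 3 - (1/2) * Real.log 2) {X Y : ℝ} (hY : 0 ≤ Y) (hYX : Y ≤ X)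
    (h : X^s + Y^s = 1) : X^2 + X*Y+Y^2 ≤ Real.sqrt (X^2+Y^2) := by
  have hX : 0 < X := by
    rcases (hY.trans hYX).eq_or_lt with h0 | h0
    · have : Y = 0 := by linarith
      rw [← h0, this, Real.zero_rpow hs0.ne'] at h; norm_num at h
    · exact h0
  obtain ⟨t, rfl⟩ : ∃ t, Y = X * t := ⟨Y/X, by field_simp⟩
  have ht0 : 0 ≤ t := nonneg_of_mul_nonneg_right hY hX
  have ht1 : t ≤ 1 := by nlinarith
  have key := yh_onevar hs0 hs h2 ht0 ht1
  rw [Real.mul_rpow hX.le ht0] at h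
  have hts := Real.rpow_nonneg ht0 s
  have hl : Real.log X = -((1/s) * Real.log (1+t^s)) := by
    have : Real.log (X^s*(1+t^s)) = 0 := by rw [show X^s*(1+t^s) = 1 by linarith, Real.log_one]
    rw [Real.log_mul (Real.rpow_pos_of_pos hX s).ne' (by positivity), Real.log_rpow hX] at this
    field_simp
    linarith
  have hsq : Real.sqrt (X^2+(X*t)^2) = X * Real.sqrt (1+t^2) := by
    rw [show X^2+(X*t)^2 = X^2*(1+t^2) by ring, Real.sqrt_mul (by positivity), Real.sqrt_sq hX.le]
  rw [hsq]
  have : X * (1+t+t^2) ≤ Real.sqrt (1+t^2) := by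
    rw [← Real.log_le_log_iff (by positivity) (by positivity), Real.log_mul hX.ne' (by positivity),
      Real.log_sqrt (by positivity)]
    linarith
  nlinarith

lemma yh_hom {s : ℝ} (hs0 : 0 < s) (hs : s < 1)
    (h2 : (1/s) * Real.log 2 = Real.log 3 - (1/2) * Real.log 2) {X Y : ℝ} (hX : 0 ≤ X) (hY : 0 ≤ Y)
    (h : X^s + Y^s = 1) : X^2 + X*Y+Y^2 ≤ Real.sqrt (X^2+Y^2) := by
  rcases le_total Y X with hl | hl
  · exact yh_hom_aux hs0 hs h2 hY hl h
  · have := yh_hom_aux hs0 hs h2 hX hl (by linarith)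
    rw [add_comm (X^2) (Y^2)]
    linarith

lemma yh_alg {α β c d R : ℝ}
    (h1 : α^4+β^4 = 1) (hR : 0 < R) (hR2 : R^2 = c^4+d^4) :
    (α^6+β^6)*(c^2+d^2) + 2*(α^3*β^3)*(c*d) ≤ (c^4+c^2*d^2+d^4)/R := by
  rw [le_div_iff₀ hR]
  have hw : α^2*β^2 ≤ 1 := by nlinarith [sq_nonneg (α^2-β^2)]
  have e : α^6+β^6 = (α^2+β^2)*(1-α^2*β^2) := by
    have : α^6+β^6 = (α^2+β^2)*(α^4+β^4-α^2*β^2) := by ring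
    rw [this, h1]
  have s1 : (α^2+β^2)^2 = 1+2*(α^2*β^2) := by rw [← h1]; ring
  have s2 : (c^2+d^2)^2 = R^2+2*(c*d)^2 := by rw [hR2]; ring
  have am : (α^2+β^2)*(c^2+d^2)*R ≤ R^2*(1+α^2*β^2)+(c*d)^2 := by
    nlinarith [sq_nonneg (R*(α^2+β^2)-(c^2+d^2))]
  have m := mul_le_mul_of_nonneg_left am (sub_nonneg.2 hw)
  have sq := mul_nonneg (mul_nonneg (sq_nonneg α) (sq_nonneg β)) (sq_nonneg (α*β*R - c*d))
  have t : c^4+c^2*d^2+d^4 = R^2 + (c*d)^2 := by rw [hR2]; ring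
  rw [t, e]
  nlinarith [m, sq]

/-- normalised endpoint inequality -/
noncomputable def yhPhi (A B C D x y : ℝ) : ℝ :=
  A^(2*x)*C^(2*y) + A^(2*x)*D^(2*y) + B^(2*x)*C^(2*y) + B^(2*x)*D^(2*y) + 2*(A^x*B^x*C^y*D^y)

lemma yh_endpoint {κ A B C D : ℝ} (hκ : 2*κ*Real.log 2 = Real.log 3 - (1/2) * Real.log 2)
    (hA : 0 ≤ A) (hB : 0 ≤ B) (hC : 0 ≤ C) (hD : 0 ≤ D) (hAB : A + B = 1) (hCD : C + D = 1) :
    yhPhi A B C D (3/4) κ ≤ 1 := by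
  have l2 : 0 < Real.log 2 := Real.log_pos (by norm_num)
  have hk1 : 1 < 2*κ := by
    have : (3/2)*Real.log 2 < Real.log 3 := by
      have : Real.log (2^3) < Real.log (3^2) := Real.log_lt_log (by norm_num) (by norm_num)
      rw [Real.log_pow, Real.log_pow] at this
      push_cast at this; linarith
    nlinarith
  have hk : 0 < κ := by linarith
  set α := A^((1:ℝ)/4)
  set β := B^((1:ℝ)/4)
  set c := C^κ
  set d := D^κ
  have pw : ∀ (z : ℝ), 0 ≤ z → ∀ n : ℕ, (z^((1:ℝ)/4))^n = z^((n:ℝ)/4) := by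
    intro z hz n
    rw [← Real.rpow_natCast, ← Real.rpow_mul hz]; ring_nf
  have pk : ∀ (z : ℝ), 0 ≤ z → z^(2*κ) = (z^κ)^2 := by
    intro z hz
    rw [← Real.rpow_natCast, ← Real.rpow_mul hz]; push_cast; ring_nf
  have q4 : ∀ z : ℝ, 0 ≤ z → (z^((1:ℝ)/4))^4 = z := by
    intro z hz; rw [pw z hz]; norm_num
  have q3 : ∀ z : ℝ, 0 ≤ z → (z^((1:ℝ)/4))^3 = z^((3:ℝ)/4) := by
    intro z hz; rw [pw z hz]; norm_num
  have q6 : ∀ z : ℝ, 0 ≤ z → (z^((1:ℝ)/4))^6 = z^(2*((3:ℝ)/4)) := by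
    intro z hz; rw [pw z hz]; norm_num
  have hc : 0 ≤ c := Real.rpow_nonneg hC _
  have hd : 0 ≤ d := Real.rpow_nonneg hD _
  have inv : ∀ z : ℝ, 0 ≤ z → ((z^κ)^2)^(1/(2*κ)) = z := by
    intro z hz
    rw [← pk z hz, ← Real.rpow_mul hz, mul_one_div_cancel (by positivity), Real.rpow_one]
  have hom := yh_hom (s := 1/(2*κ)) (X := c^2) (Y := d^2) (by positivity)
    (by rw [div_lt_one (by positivity)]; exact hk1) (by rw [one_div_one_div]; exact hκ)
    (by positivity) (by positivity) (by rw [inv C hC, inv D hD]; exact hCD)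
  have hpos : 0 < (c^2)^2+(d^2)^2 := by
    have : c ≠ 0 ∨ d ≠ 0 := by
      by_contra hh
      push Not at hh
      have h1 := inv C hC
      have h2 := inv D hD
      change (c^2)^(1/(2*κ)) = C at h1
      change (d^2)^(1/(2*κ)) = D at h2
      rw [hh.1, zero_pow two_ne_zero, Real.zero_rpow (by positivity)] at h1
      rw [hh.2, zero_pow two_ne_zero, Real.zero_rpow (by positivity)] at h2
      linarith
    rcases this with h | h <;> positivity
  have hR : 0 < Real.sqrt ((c^2)^2+(d^2)^2) := Real.sqrt_pos.2 hpos
  have alg := yh_alg (α := α) (β := β) (c := c) (d := d) (R := Real.sqrt ((c^2)^2+(d^2)^2))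
    (by rw [q4 A hA, q4 B hB]; exact hAB) hR
    (by rw [Real.sq_sqrt hpos.le]; ring)
  have : (c^4+c^2*d^2+d^4)/Real.sqrt ((c^2)^2+(d^2)^2) ≤ 1 := by
    rw [div_le_one hR]
    linarith
  have fin := alg.trans this
  rw [q6 A hA, q6 B hB, q3 A hA, q3 B hB] at fin
  unfold yhPhi
  rw [pk C hC, pk D hD]
  linarith

lemma yhPhi_symm (A B C D x y : ℝ) : yhPhi A B C D x y = yhPhi C D A B y x := by
  unfold yhPhi; ring

lemma yh_geom {A C x0 x1 y0 y1 θ : ℝ} (hA : 0 ≤ A) (hC : 0 ≤ C) (hθ0 : 0 ≤ θ) (hθ1 : θ ≤ 1)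
    (hx0 : 0 < x0) (hx1 : 0 < x1) (hy0 : 0 < y0) (hy1 : 0 < y1) :
    A^((1-θ)*x0+θ*x1)*C^((1-θ)*y0+θ*y1) ≤ (1-θ)*(A^x0*C^y0) + θ*(A^x1*C^y1) := by
  have := Real.geom_mean_le_arith_mean2_weighted (sub_nonneg.2 hθ1) hθ0
    (mul_nonneg (Real.rpow_nonneg hA x0) (Real.rpow_nonneg hC y0))
    (mul_nonneg (Real.rpow_nonneg hA x1) (Real.rpow_nonneg hC y1)) (by ring)
  refine le_trans (le_of_eq ?_) this
  have sp : ∀ z a b : ℝ, 0 ≤ z → 0 < a → 0 < b → z^((1-θ)*a+θ*b) = (z^a)^(1-θ)*(z^b)^θ := by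
    intro z a b hz ha hb
    have : 0 < (1-θ)*a+θ*b := by
      rcases hθ0.eq_or_lt with h | h
      · rw [← h]; linarith
      · have := mul_nonneg (sub_nonneg.2 hθ1) ha.le
        have := mul_pos h hb
        linarith
    rw [Real.rpow_add' hz this.ne', ← Real.rpow_mul hz, ← Real.rpow_mul hz, mul_comm a, mul_comm b]
  rw [sp A _ _ hA hx0 hx1, sp C _ _ hC hy0 hy1,
    Real.mul_rpow (Real.rpow_nonneg hA _) (Real.rpow_nonneg hC _),
    Real.mul_rpow (Real.rpow_nonneg hA _) (Real.rpow_nonneg hC _)]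
  ring

lemma yh_interp {κ θ A B C D : ℝ} (hκ : 2*κ*Real.log 2 = Real.log 3 - (1/2) * Real.log 2)
    (hκ0 : 0 < κ) (hθ0 : 0 ≤ θ) (hθ1 : θ ≤ 1)
    (hA : 0 ≤ A) (hB : 0 ≤ B) (hC : 0 ≤ C) (hD : 0 ≤ D) (hAB : A + B = 1) (hCD : C + D = 1) :
    yhPhi A B C D ((1-θ)*(3/4)+θ*κ) ((1-θ)*κ+θ*(3/4)) ≤ 1 := by
  have e1 := yh_endpoint hκ hA hB hC hD hAB hCD
  have e2 := yh_endpoint hκ hC hD hA hB hCD hAB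
  rw [← yhPhi_symm] at e2
  have g : ∀ U V : ℝ, 0 ≤ U → 0 ≤ V → U^(2*((1-θ)*(3/4)+θ*κ))*V^(2*((1-θ)*κ+θ*(3/4)))
      ≤ (1-θ)*(U^(2*(3/4:ℝ))*V^(2*κ)) + θ*(U^(2*κ)*V^(2*(3/4:ℝ))) := by
    intro U V hU hV
    have := yh_geom (x0 := 2*(3/4)) (x1 := 2*κ) (y0 := 2*κ) (y1 := 2*(3/4)) hU hV hθ0 hθ1
      (by norm_num) (by positivity) (by positivity) (by norm_num)
    convert this using 3 <;> ring
  have g5 : ∀ U V : ℝ, 0 ≤ U → 0 ≤ V → U^(((1-θ)*(3/4)+θ*κ))*V^(((1-θ)*κ+θ*(3/4)))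
      ≤ (1-θ)*(U^((3/4:ℝ))*V^(κ)) + θ*(U^(κ)*V^((3/4:ℝ))) := by
    intro U V hU hV
    exact yh_geom hU hV hθ0 hθ1 (by norm_num) (by positivity) (by positivity) (by norm_num)
  have g5' := g5 (A*B) (C*D) (by positivity) (by positivity)
  simp only [Real.mul_rpow hA hB, Real.mul_rpow hC hD] at g5'
  have g1 := g A C hA hC
  have g2 := g A D hA hD
  have g3 := g B C hB hC
  have g4 := g B D hB hD
  have m1 := mul_le_mul_of_nonneg_left e1 (sub_nonneg.2 hθ1)
  have m2 := mul_le_mul_of_nonneg_left e2 hθ0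
  unfold yhPhi at *
  nlinarith

lemma yh_dim1 {p q a b c d : ℝ} (hp : 0 < p) (hq : 0 < q)
    (H : ∀ A B C D : ℝ, 0 ≤ A → 0 ≤ B → 0 ≤ C → 0 ≤ D → A + B = 1 → C + D = 1 →
      yhPhi A B C D (1/p) (1/q) ≤ 1)
    (ha : 0 ≤ a) (hb : 0 ≤ b) (hc : 0 ≤ c) (hd : 0 ≤ d) :
    (a*c)^2 + (a*d+b*c)^2+(b*d)^2 ≤ ((a^p+b^p)^(1/p)*(c^q+d^q)^(1/q))^2 := by
  have norm : ∀ (r u v : ℝ), 0 < r → 0 ≤ u → 0 ≤ v → (u = 0 ∧ v = 0) ∨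
      ∃ A B, 0 ≤ A ∧ 0 ≤ B ∧ A + B = 1 ∧ u = (u^r+v^r)^(1/r)*A^(1/r) ∧ v = (u^r+v^r)^(1/r)*B^(1/r) := by
    intro r u v hr hu hv
    have hur := Real.rpow_nonneg hu r
    have hvr := Real.rpow_nonneg hv r
    rcases (add_nonneg hur hvr).eq_or_lt with h | h
    · left
      have h1 : u^r = 0 := by linarith
      have h2 : v^r = 0 := by linarith
      exact ⟨(Real.rpow_eq_zero hu hr.ne').1 h1, (Real.rpow_eq_zero hv hr.ne').1 h2⟩
    · right
      refine ⟨u^r/(u^r+v^r), v^r/(u^r+v^r), by positivity, by positivity, by field_simp, ?_, ?_⟩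
      · rw [← Real.mul_rpow h.le (by positivity), mul_div_cancel₀ _ h.ne', one_div, Real.rpow_rpow_inv hu hr.ne']
      · rw [← Real.mul_rpow h.le (by positivity), mul_div_cancel₀ _ h.ne', one_div, Real.rpow_rpow_inv hv hr.ne']
  rcases norm p a b hp ha hb with ⟨rfl, rfl⟩ | ⟨A, B, hA, hB, hAB, ea, eb⟩
  · simp; positivity
  rcases norm q c d hq hc hd with ⟨rfl, rfl⟩ | ⟨C, D, hC, hD, hCD, ec, ed⟩
  · simp; positivity
  have h := H A B C D hA hB hC hD hAB hCD
  have pk : ∀ (z k : ℝ), 0 ≤ z → z^(2*k) = (z^k)^2 := by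
    intro z k hz
    rw [← Real.rpow_natCast, ← Real.rpow_mul hz]; push_cast; ring_nf
  unfold yhPhi at h
  rw [pk A _ hA, pk B _ hB, pk C _ hC, pk D _ hD] at h
  generalize (a^p+b^p)^(1/p) = M at *
  generalize (c^q+d^q)^(1/q) = N at *
  rw [ea, eb, ec, ed]
  have := mul_le_mul_of_nonneg_left h (sq_nonneg (M*N))
  nlinarith

lemma yh_second {p : ℝ} (hp : 1 ≤ p) (hp2 : p < 4/3) :
    ∃ ε : ℝ, 0 < ε ∧ ε < 1 ∧ (1+ε)^p+(1-ε)^p < 2 * (1+ε^2/3)^(p/2) := by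
  set k := p*(4/3-p)/4 with hk
  have hkpos : 0 < k := by rw [hk]; have : 0 < 4/3-p := by linarith
                           positivity
  set φ : ℝ → ℝ := fun x => ((1+x)^p+(1-x)^p)/2 - (1+x^2/3)^(p/2) + k*x^2 with hφ
  set ψ : ℝ → ℝ := fun x => (p*(1+x)^(p-1) - p*(1-x)^(p-1))/2 - (2*x/3)*(p/2)*(1+x^2/3)^(p/2-1) + k*(2*x) with hψ
  have d1 : ∀ x : ℝ, HasDerivAt (fun x : ℝ => 1 + x) 1 x := fun x => (hasDerivAt_id x).const_add 1
  have d2 : ∀ x : ℝ, HasDerivAt (fun x : ℝ => 1 - x) (-1) x := fun x => (hasDerivAt_id x).const_sub 1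
  have d3 : ∀ x : ℝ, HasDerivAt (fun x : ℝ => 1 + x^2/3) (2*x/3) x := fun x => by
    have := ((hasDerivAt_pow 2 x).div_const 3).const_add 1
    simpa using this
  have d4 : ∀ x : ℝ, HasDerivAt (fun x : ℝ => k*x^2) (k*(2*x)) x := fun x => by
    have := (hasDerivAt_pow 2 x).const_mul k
    simpa using this
  have hd : ∀ x : ℝ, -1 < x → x < 1 → HasDerivAt φ (ψ x) x := by
    intro x h1 h2
    have a1 := (d1 x).rpow_const (p := p) (Or.inl (by linarith))
    have a2 := (d2 x).rpow_const (p := p) (Or.inl (by linarith))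
    have a3 := (d3 x).rpow_const (p := p/2) (Or.inl (by positivity))
    refine ((((a1.add a2).div_const 2).sub a3).add (d4 x)).congr_deriv ?_
    simp only [hψ]; ring
  have hd2 : HasDerivAt ψ (p*(p-4/3)/2) 0 := by
    have a1 := ((d1 0).rpow_const (p := p-1) (Or.inl (by norm_num))).const_mul p
    have a2 := ((d2 0).rpow_const (p := p-1) (Or.inl (by norm_num))).const_mul p
    have a3 := (d3 0).rpow_const (p := p/2-1) (Or.inl (by norm_num))
    have l1 : HasDerivAt (fun x : ℝ => (2*x/3)*(p/2)) ((2/3)*(p/2)) 0 := by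
      have := (((hasDerivAt_id (0:ℝ)).const_mul 2).div_const 3).mul_const (p/2)
      simpa using this
    have l2 : HasDerivAt (fun x : ℝ => k*(2*x)) (k*2) 0 := by
      have := ((hasDerivAt_id (0:ℝ)).const_mul 2).const_mul k
      simpa using this
    refine ((((a1.sub a2).div_const 2).sub (l1.mul a3)).add l2).congr_deriv ?_
    simp [hk]; ring
  have ev : deriv φ =ᶠ[nhds 0] ψ := by
    filter_upwards [Ioo_mem_nhds (show (-1:ℝ) < 0 by norm_num) (show (0:ℝ) < 1 by norm_num)] with x hx
    exact (hd x hx.1 hx.2).deriv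
  have loc : IsLocalMax φ 0 := by
    apply isLocalMax_of_deriv_deriv_neg
    · rw [ev.deriv_eq, hd2.deriv]; nlinarith
    · rw [(hd 0 (by norm_num) (by norm_num)).deriv]; simp [hψ]
    · exact (hd 0 (by norm_num) (by norm_num)).continuousAt
  obtain ⟨r, hr, hball⟩ := Metric.eventually_nhds_iff.1 loc
  refine ⟨min (r/2) (1/2), by positivity, (min_le_right _ _).trans_lt (by norm_num), ?_⟩
  set ε := min (r/2) (1/2)
  have he : 0 < ε := by positivity
  have := hball (y := ε) (by
    rw [Real.dist_eq, sub_zero, abs_of_pos he]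
    exact (min_le_left _ _).trans_lt (by linarith))
  simp only [hφ] at this
  norm_num at this
  have : 0 < k*ε^2 := by positivity
  linarith
lemma yh_tsum_cons {d : ℕ} (F : (Fin (d+1) → ℤ) → ℝ) (hF : F.support.Finite) :
    ∑' x, F x = ∑' i : ℤ, ∑' y : Fin d → ℤ, F (Fin.cons i y) := by
  have hs : Summable F := summable_of_hasFiniteSupport hF
  rw [← (Fin.consEquiv (fun _ : Fin (d+1) => ℤ)).tsum_eq F]
  exact Summable.tsum_prod ((Fin.consEquiv (fun _ : Fin (d+1) => ℤ)).summable_iff.2 hs)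

lemma yh_fin {d : ℕ} {F : (Fin d → ℤ) → ℝ} (n : ℤ)
    (h : ∀ x, F x ≠ 0 → ∀ i, 0 ≤ x i ∧ x i ≤ n) : F.support.Finite := by
  refine (Set.finite_Icc (0 : Fin d → ℤ) (fun _ => n)).subset ?_
  intro x hx
  exact ⟨fun i => (h x hx i).1, fun i => (h x hx i).2⟩

lemma yh_cube {d : ℕ} {f : (Fin d → ℤ) → ℝ} (hf : SupportedInCube f) (x : Fin d → ℤ) (hx : f x ≠ 0) (i : Fin d) :
    0 ≤ x i ∧ x i ≤ 1 := by
  have : InCube x := by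
    by_contra h; exact hx (hf x h)
  rcases this i with h | h <;> simp [h]

lemma yh_cube_fin {d : ℕ} {f : (Fin d → ℤ) → ℝ} (hf : SupportedInCube f) : f.support.Finite :=
  yh_fin 1 (yh_cube hf)

lemma yh_conv_supp {d : ℕ} {f g : (Fin d → ℤ) → ℝ} (hf : SupportedInCube f) (hg : SupportedInCube g)
    (x : Fin d → ℤ) (hx : cconv f g x ≠ 0) (i : Fin d) : 0 ≤ x i ∧ x i ≤ 2 := by
  obtain ⟨u, hu⟩ : ∃ u, f u * g (x - u) ≠ 0 := by
    by_contra h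
    push Not at h
    apply hx
    simp [cconv, h]
  have h1 := yh_cube hf u (left_ne_zero_of_mul hu) i
  have h2 := yh_cube hg _ (right_ne_zero_of_mul hu) i
  simp only [Pi.sub_apply] at h2
  constructor <;> linarith [h1.1, h1.2, h2.1, h2.2]

lemma yh_conv_fin {d : ℕ} {f g : (Fin d → ℤ) → ℝ} (hf : SupportedInCube f) (hg : SupportedInCube g) :
    (cconv f g).support.Finite := yh_fin 2 (yh_conv_supp hf hg)

/-- slice of a function -/
def yhS {d : ℕ} (f : (Fin (d+1) → ℤ) → ℝ) (i : ℤ) : (Fin d → ℤ) → ℝ := fun y => f (Fin.cons i y)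

lemma yhS_supp {d : ℕ} {f : (Fin (d+1) → ℤ) → ℝ} (hf : SupportedInCube f) (i : ℤ) :
    SupportedInCube (yhS f i) := by
  intro y hy
  apply hf
  intro h
  exact hy fun j => by simpa using h j.succ

lemma yhS_zero {d : ℕ} {f : (Fin (d+1) → ℤ) → ℝ} (hf : SupportedInCube f) (i : ℤ) (h0 : i ≠ 0) (h1 : i ≠ 1) :
    yhS f i = 0 := by
  funext y
  apply hf
  intro h
  have := h 0
  simp [h0, h1] at this

lemma yh_norm_slice {d : ℕ} {f : (Fin (d+1) → ℤ) → ℝ} (hf : SupportedInCube f) {s : ℝ} (hs : 0 < s) :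
    ∑' x, |f x|^s = ∑' y, |yhS f 0 y|^s + ∑' y, |yhS f 1 y|^s := by
  rw [yh_tsum_cons]
  · rw [tsum_eq_sum (s := {0, 1})]
    · rw [Finset.sum_pair (by norm_num)]; rfl
    · intro i hi
      simp only [Finset.mem_insert, Finset.mem_singleton, not_or] at hi
      have := yhS_zero hf i hi.1 hi.2
      change ∑' y, |yhS f i y|^s = 0
      simp [this, Real.zero_rpow hs.ne']
  · refine (yh_cube_fin hf).subset ?_
    intro x hx h
    apply hx
    simp [h, Real.zero_rpow hs.ne']

lemma yh_conv_slice {d : ℕ} {f g : (Fin (d+1) → ℤ) → ℝ} (hf : SupportedInCube f) (k : ℤ) (m : Fin d → ℤ) :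
    cconv f g (Fin.cons k m) = cconv (yhS f 0) (yhS g k) m + cconv (yhS f 1) (yhS g (k-1)) m := by
  have e : ∀ (i : ℤ) (y : Fin d → ℤ), (Fin.cons k m : Fin (d+1) → ℤ) - Fin.cons i y = Fin.cons (k-i) (m-y) := by
    intro i y
    funext j
    refine Fin.cases ?_ (fun j => ?_) j <;> simp
  unfold cconv
  rw [yh_tsum_cons]
  · rw [tsum_eq_sum (s := {0, 1})]
    · rw [Finset.sum_pair (by norm_num)]
      simp only [e, sub_zero]; rfl
    · intro i hi
      simp only [Finset.mem_insert, Finset.mem_singleton, not_or] at hi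
      have := yhS_zero hf i hi.1 hi.2
      have h2 : ∀ y, f (Fin.cons i y) = 0 := fun y => congrFun this y
      simp [h2]
  · refine (yh_cube_fin hf).subset ?_
    intro x hx h
    apply hx
    simp [h]

lemma yh_conv_zero_left {d : ℕ} (g : (Fin d → ℤ) → ℝ) : cconv 0 g = 0 := by
  funext x; simp [cconv]

lemma yh_conv_zero_right {d : ℕ} (f : (Fin d → ℤ) → ℝ) : cconv f 0 = 0 := by
  funext x; simp [cconv]

lemma yh_conv_sq {d : ℕ} {f g : (Fin (d+1) → ℤ) → ℝ} (hf : SupportedInCube f) (hg : SupportedInCube g) :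
    ∑' x, (cconv f g x)^2 = ∑' y, (cconv (yhS f 0) (yhS g 0) y)^2
      + ∑' y, (cconv (yhS f 0) (yhS g 1) y + cconv (yhS f 1) (yhS g 0) y)^2
      + ∑' y, (cconv (yhS f 1) (yhS g 1) y)^2 := by
  rw [yh_tsum_cons]
  · rw [tsum_eq_sum (s := {0, 1, 2})]
    · rw [Finset.sum_insert (by norm_num), Finset.sum_pair (by norm_num)]
      simp only [yh_conv_slice hf]
      rw [yhS_zero hg (0-1) (by norm_num) (by norm_num), yhS_zero hg 2 (by norm_num) (by norm_num)]
      norm_num [yh_conv_zero_right, add_assoc]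
    · intro i hi
      simp only [Finset.mem_insert, Finset.mem_singleton, not_or] at hi
      simp only [yh_conv_slice hf]
      rw [yhS_zero hg i hi.1 hi.2.1, yhS_zero hg (i-1) (by omega) (by omega)]
      simp [yh_conv_zero_right]
  · refine (yh_conv_fin hf hg).subset ?_
    intro x hx h
    apply hx
    simp [h]

lemma yh_tri {d : ℕ} {u v : (Fin d → ℤ) → ℝ} (hu : u.support.Finite) (hv : v.support.Finite)
    {M N : ℝ} (hM : 0 ≤ M) (hN : 0 ≤ N) (h1 : ∑' x, (u x)^2 ≤ M^2) (h2 : ∑' x, (v x)^2 ≤ N^2) :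
    ∑' x, (u x + v x)^2 ≤ (M+N)^2 := by
  classical
  set s := hu.toFinset ∪ hv.toFinset with hs
  have su : ∀ x ∉ s, u x = 0 := by
    intro x hx; simp [hs] at hx; exact hx.1
  have sv : ∀ x ∉ s, v x = 0 := by
    intro x hx; simp [hs] at hx; exact hx.2
  rw [tsum_eq_sum (s := s) (by intro x hx; simp [su x hx])] at h1
  rw [tsum_eq_sum (s := s) (by intro x hx; simp [sv x hx])] at h2
  rw [tsum_eq_sum (s := s) (by intro x hx; simp [su x hx, sv x hx])]
  have cs := Finset.sum_mul_sq_le_sq_mul_sq s u v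
  have e : ∑ x ∈ s, (u x + v x)^2 = ∑ x ∈ s, (u x)^2 + 2 * ∑ x ∈ s, u x * v x + ∑ x ∈ s, (v x)^2 := by
    rw [Finset.mul_sum, ← Finset.sum_add_distrib, ← Finset.sum_add_distrib]
    exact Finset.sum_congr rfl fun x _ => by ring
  have : ∑ x ∈ s, u x * v x ≤ M * N := by
    refine abs_le_of_sq_le_sq' ?_ (by positivity) |>.2
    calc _ ≤ _ := cs
      _ ≤ M^2*N^2 := mul_le_mul h1 h2 (Finset.sum_nonneg fun _ _ => sq_nonneg _) (sq_nonneg _)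
      _ = _ := by ring
  rw [e]
  nlinarith

lemma yh_induct {p q : ℝ} (hp : 0 < p) (hq : 0 < q)
    (H : ∀ a b c d : ℝ, 0 ≤ a → 0 ≤ b → 0 ≤ c → 0 ≤ d →
      (a*c)^2 + (a*d+b*c)^2+(b*d)^2 ≤ ((a^p+b^p)^(1/p)*(c^q+d^q)^(1/q))^2) :
    ∀ (d : ℕ) (f g : (Fin d → ℤ) → ℝ), SupportedInCube f → SupportedInCube g →
      ∑' x, (cconv f g x)^2 ≤ ((∑' x, |f x|^p)^(1/p) * (∑' x, |g x|^q)^(1/q))^2 := by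
  intro d
  induction d with
  | zero =>
    intro f g _ _
    have e : ∀ (r t : ℝ), 0 < r → ((|t|^r)^(1/r)) = |t| := by
      intro r t hr
      rw [one_div, Real.rpow_rpow_inv (abs_nonneg t) hr.ne']
    have hz : ∀ F : (Fin 0 → ℤ) → ℝ, ∑' x, F x = F 0 := by
      intro F
      rw [tsum_fintype]
      exact Fintype.sum_subsingleton _ 0
    have hc : cconv f g 0 = f 0 * g 0 := by
      unfold cconv
      rw [hz, sub_zero]
    rw [hz, hz, hz, e _ _ hp, e _ _ hq, hc, ← abs_mul, sq_abs]
  | succ d ih =>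
    intro f g hf hg
    have nn : ∀ (r : ℝ) (h : (Fin d → ℤ) → ℝ), 0 ≤ ∑' x, |h x|^r := fun r h =>
      tsum_nonneg fun x => Real.rpow_nonneg (abs_nonneg _) _
    have nn' : ∀ (r : ℝ) (h : (Fin d → ℤ) → ℝ), 0 ≤ (∑' x, |h x|^r)^(1/r) := fun r h =>
      Real.rpow_nonneg (nn r h) _
    have f0 := yhS_supp hf 0
    have f1 := yhS_supp hf 1
    have g0 := yhS_supp hg 0
    have g1 := yhS_supp hg 1
    have key := H _ _ _ _ (nn' p (yhS f 0)) (nn' p (yhS f 1)) (nn' q (yhS g 0)) (nn' q (yhS g 1))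
    have inv : ∀ (r z : ℝ), 0 < r → 0 ≤ z → (z^(1/r))^r = z := by
      intro r z hr hz
      rw [one_div, Real.rpow_inv_rpow hz hr.ne']
    rw [inv p _ hp (nn _ _), inv p _ hp (nn _ _), inv q _ hq (nn _ _), inv q _ hq (nn _ _),
      ← yh_norm_slice hf hp, ← yh_norm_slice hg hq] at key
    rw [yh_conv_sq hf hg]
    refine le_trans ?_ key
    refine add_le_add (add_le_add (ih _ _ f0 g0) ?_) (ih _ _ f1 g1)
    exact yh_tri (yh_conv_fin f0 g1) (yh_conv_fin f1 g0)
      (mul_nonneg (nn' _ _) (nn' _ _)) (mul_nonneg (nn' _ _) (nn' _ _)) (ih _ _ f0 g1) (ih _ _ f1 g0)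

lemma yh_lnorm_two {d : ℕ} (F : (Fin d → ℤ) → ℝ) : lnorm 2 F = Real.sqrt (∑' x, (F x)^2) := by
  unfold lnorm
  rw [Real.sqrt_eq_rpow]
  congr 2
  funext x
  rw [Real.rpow_two, sq_abs]

lemma yh_num {p q : ℝ} (hp : 0 < p) (hq : 0 < q)
    (H : ∀ f g : (Fin 1 → ℤ) → ℝ, SupportedInCube f → SupportedInCube g →
      Real.sqrt (∑' x, (cconv f g x)^2) ≤ (∑' x, |f x|^p)^(1/p) * (∑' x, |g x|^q)^(1/q))
    (a b c d : ℝ) (ha : 0 ≤ a) (hb : 0 ≤ b) (hc : 0 ≤ c) (hd : 0 ≤ d) :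
    Real.sqrt ((a*c)^2 + (a*d+b*c)^2+(b*d)^2) ≤ (a^p+b^p)^(1/p)*(c^q+d^q)^(1/q) := by
  set F : ℝ → ℝ → (Fin 1 → ℤ) → ℝ := fun a b x => if x 0 = 0 then a else if x 0 = 1 then b else 0 with hF
  have hsupp : ∀ a b, SupportedInCube (F a b) := by
    intro a b x hx
    have h0 : x 0 ≠ 0 := fun h => hx fun i => by rw [Subsingleton.elim i 0]; exact Or.inl h
    have h1 : x 0 ≠ 1 := fun h => hx fun i => by rw [Subsingleton.elim i 0]; exact Or.inr h
    simp [hF, h0, h1]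
  have s0 : ∀ a b, yhS (F a b) 0 = fun _ => a := by
    intro a b; funext y; simp [yhS, hF]
  have s1 : ∀ a b, yhS (F a b) 1 = fun _ => b := by
    intro a b; funext y; simp [yhS, hF]
  have hn : ∀ r a b : ℝ, 0 < r → 0 ≤ a → 0 ≤ b → ∑' x, |F a b x|^r = a^r+b^r := by
    intro r a b hr ha hb
    rw [yh_norm_slice (hsupp a b) hr, s0, s1, tsum_fintype, tsum_fintype, Fintype.sum_unique, Fintype.sum_unique,
      abs_of_nonneg ha, abs_of_nonneg hb]
  have hcv : ∀ a b : ℝ, ∀ y : Fin 0 → ℤ, cconv (fun _ => a) (fun _ => b) y = a * b := by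
    intro a b y
    unfold cconv
    rw [tsum_fintype, Fintype.sum_unique]
  have h := H (F a b) (F c d) (hsupp a b) (hsupp c d)
  rw [hn p a b hp ha hb, hn q c d hq hc hd, yh_conv_sq (hsupp a b) (hsupp c d), s0, s1, s0, s1] at h
  simp only [hcv, tsum_fintype, Fintype.sum_unique] at h
  exact h

lemma yh_nec {p q : ℝ} (hp : 1 ≤ p) (hpq : 1/p + 1/q = Real.logb 2 6 / 2)
    (H : ∀ a b c d : ℝ, 0 ≤ a → 0 ≤ b → 0 ≤ c → 0 ≤ d →
      Real.sqrt ((a*c)^2 + (a*d+b*c)^2+(b*d)^2) ≤ (a^p+b^p)^(1/p)*(c^q+d^q)^(1/q)) : 4/3 ≤ p := by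
  by_contra hlt
  obtain ⟨ε, e0, e1, he⟩ := yh_second hp (not_le.1 hlt)
  have h := H (1+ε) (1-ε) 1 1 (by linarith) (by linarith) zero_le_one zero_le_one
  have p0 : 0 < p := by linarith
  have hN : 0 ≤ (1+ε)^p+(1-ε)^p :=
    add_nonneg (Real.rpow_nonneg (by linarith) _) (Real.rpow_nonneg (by linarith) _)
  have h3 : ((1+ε)^p+(1-ε)^p)^(1/p) < (2 * (1+ε^2/3)^(p/2))^(1/p) :=
    Real.rpow_lt_rpow hN he (by positivity)
  have h4 : (2 * (1+ε^2/3)^(p/2))^(1/p) = 2^(1/p) * Real.sqrt (1+ε^2/3) := by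
    rw [Real.mul_rpow (by norm_num) (by positivity), ← Real.rpow_mul (by positivity), Real.sqrt_eq_rpow]
    congr 2
    field_simp
  have h5 : (2:ℝ)^(1/p) * 2^(1/q) = Real.sqrt 6 := by
    rw [← Real.rpow_add (by norm_num), hpq, Real.sqrt_eq_rpow, show Real.logb 2 6 / 2 = Real.logb 2 6 * (1/2) by ring,
      Real.rpow_mul (by norm_num), Real.rpow_logb (by norm_num) (by norm_num) (by norm_num)]
  have h6 : ((1+ε)*1)^2 + ((1+ε)*1+(1-ε)*1)^2+((1-ε)*1)^2 = 6 * (1+ε^2/3) := by ring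
  rw [h6, Real.sqrt_mul (by norm_num), ← h5, Real.one_rpow, show (1:ℝ)+1 = 2 by norm_num] at h
  rw [h4] at h3
  have h7 : (0:ℝ) < 2^(1/q) := by positivity
  have := mul_lt_mul_of_pos_right h3 h7
  linarith

lemma yh_ne_top {p q : ℝ≥0∞} (hq : 1 ≤ q)
    (hpq : 1 / p + 1 / q = ENNReal.ofReal (Real.logb 2 6 / 2)) : p ≠ ∞ := by
  rintro rfl
  have h1 : 1 / q ≤ 1 := by
    rw [one_div]; exact ENNReal.inv_le_one.2 hq
  rw [ENNReal.div_top, zero_add] at hpq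
  rw [hpq, ENNReal.ofReal_le_one] at h1
  have : 2 < Real.logb 2 6 := by
    rw [Real.lt_logb_iff_rpow_lt (by norm_num) (by norm_num)]
    norm_num
  linarith

theorem young_hypercube_r_two_critical_line (p q : ℝ≥0∞) (hp : 1 ≤ p) (hq : 1 ≤ q)
    (hpq : 1 / p + 1 / q = ENNReal.ofReal (Real.logb 2 6 / 2)) :
    (∀ d : ℕ, 1 ≤ d → ∀ f g : (Fin d → ℤ) → ℝ,
      SupportedInCube f → SupportedInCube g →
        lnorm 2 (cconv f g) ≤ lnormE p f * lnormE q g)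
    ↔ (ENNReal.ofReal (4 / 3) ≤ p ∧ ENNReal.ofReal (4 / 3) ≤ q ∧
       p ≤ ENNReal.ofReal (1 / (Real.logb 2 3 / 2 - 1 / 4)) ∧
       q ≤ ENNReal.ofReal (1 / (Real.logb 2 3 / 2 - 1 / 4))) := by
  have pt : p ≠ ∞ := yh_ne_top hq hpq
  have qt : q ≠ ∞ := yh_ne_top hp (by rw [add_comm]; exact hpq)
  lift p to NNReal using pt
  lift q to NNReal using qt
  have hp1 : (1:ℝ) ≤ (p:ℝ) := by exact_mod_cast hp
  have hq1 : (1:ℝ) ≤ (q:ℝ) := by exact_mod_cast hq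
  have hp0 : (0:ℝ) < p := by linarith
  have hq0 : (0:ℝ) < q := by linarith
  have l6 : Real.logb 2 6 = 1 + Real.logb 2 3 := by
    rw [show (6:ℝ) = 2*3 by norm_num, Real.logb_mul (by norm_num) (by norm_num), Real.logb_self_eq_one (by norm_num)]
  have l3a : 3/2 < Real.logb 2 3 := by
    have : Real.logb 2 (3^2) = 2 * Real.logb 2 3 := by
      rw [Real.logb_pow]; norm_num
    have h3 : 3 < Real.logb 2 (3^2) := by
      rw [Real.lt_logb_iff_rpow_lt (by norm_num) (by norm_num)]
      norm_num
    linarith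
  have l3b : Real.logb 2 3 < 2 := by
    rw [Real.logb_lt_iff_lt_rpow (by norm_num) (by norm_num)]
    norm_num
  have hs : 1/(p:ℝ) + 1/(q:ℝ) = Real.logb 2 6 / 2 := by
    have := congrArg ENNReal.toReal hpq
    rw [ENNReal.toReal_ofReal (by linarith), ENNReal.toReal_add] at this
    · simpa using this
    · exact ENNReal.div_ne_top ENNReal.one_ne_top (by intro h; rw [h] at hp; simp at hp)
    · exact ENNReal.div_ne_top ENNReal.one_ne_top (by intro h; rw [h] at hq; simp at hq)
  set κ := Real.logb 2 3 / 2 - 1 / 4 with hκ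
  have hs' : 1/(p:ℝ) + 1/(q:ℝ) = 3/4 + κ := by rw [hs, l6, hκ]; ring
  have κ0 : 0 < κ := by linarith
  have κ1 : κ < 3/4 := by linarith
  have lo : ∀ r : NNReal, ENNReal.ofReal (4/3) ≤ (r:ℝ≥0∞) ↔ 4/3 ≤ (r:ℝ) := by
    intro r
    rw [← ENNReal.ofReal_coe_nnreal, ENNReal.ofReal_le_ofReal_iff r.coe_nonneg]
  have up : ∀ r : NNReal, (r:ℝ≥0∞) ≤ ENNReal.ofReal (1/κ) ↔ (r:ℝ) ≤ 1/κ := by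
    intro r
    rw [← ENNReal.ofReal_coe_nnreal, ENNReal.ofReal_le_ofReal_iff (by positivity)]
  rw [lo, lo, up, up]
  have nE : ∀ (r : NNReal) (d : ℕ) (f : (Fin d → ℤ) → ℝ),
      lnormE (r:ℝ≥0∞) f = (∑' x, |f x|^(r:ℝ))^(1/(r:ℝ)) := by
    intro r d f
    simp [lnormE]
  simp only [nE, yh_lnorm_two]
  have inv34 : ∀ r : ℝ, 0 < r → (4/3 ≤ r ↔ 1/r ≤ 3/4) := by
    intro r hr
    rw [div_le_iff₀ hr]
    constructor <;> intro h <;> linarith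
  have invk : ∀ r : ℝ, 0 < r → (r ≤ 1/κ ↔ κ ≤ 1/r) := by
    intro r hr
    rw [le_div_iff₀ κ0, le_div_iff₀ hr, mul_comm]
  rw [inv34 _ hp0, inv34 _ hq0, invk _ hp0, invk _ hq0]
  constructor
  · intro H
    have num := yh_num hp0 hq0 (H 1 le_rfl)
    have a := (inv34 _ hp0).1 (yh_nec hp1 hs num)
    have b := (inv34 _ hq0).1 (yh_nec (p := q) (q := p) hq1 (by rw [add_comm]; exact hs) (by
      intro a b c d ha hb hc hd
      have := num c d a b hc hd ha hb
      rw [mul_comm ((c^(p:ℝ) + d^(p:ℝ))^(1/(p:ℝ)))] at this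
      refine le_trans (le_of_eq ?_) this
      congr 1; ring))
    exact ⟨a, b, by linarith, by linarith⟩
  · rintro ⟨h1, -, h3, -⟩ d - f g hf hg
    have hk' : 2*κ*Real.log 2 = Real.log 3 - (1/2) * Real.log 2 := by
      have : Real.log 2 ≠ 0 := (Real.log_pos (by norm_num)).ne'
      rw [hκ, Real.logb]; field_simp; ring
    have hd : 0 < 3/4 - κ := by linarith
    obtain ⟨θ, hθ⟩ : ∃ θ, θ = (3/4 - 1/(p:ℝ))/(3/4-κ) := ⟨_, rfl⟩
    have hθ0 : 0 ≤ θ := by rw [hθ]; exact div_nonneg (by linarith) hd.le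
    have hθ1 : θ ≤ 1 := by rw [hθ, div_le_one hd]; linarith
    have hm : θ * (3/4-κ) = 3/4 - 1/(p:ℝ) := by rw [hθ]; exact div_mul_cancel₀ _ hd.ne'
    have ep : (1-θ)*(3/4)+θ*κ = 1/(p:ℝ) := by linarith
    have eq : (1-θ)*κ+θ*(3/4) = 1/(q:ℝ) := by linarith
    have main := yh_induct hp0 hq0 (fun a b c d ha hb hc hd => yh_dim1 hp0 hq0
      (fun A B C D hA hB hC hD hAB hCD => by
        rw [← ep, ← eq]; exact yh_interp hk' κ0 hθ0 hθ1 hA hB hC hD hAB hCD) ha hb hc hd) d f g hf hg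
    refine Real.sqrt_le_iff.2 ⟨?_, main⟩
    exact mul_nonneg (Real.rpow_nonneg (tsum_nonneg fun x => Real.rpow_nonneg (abs_nonneg _) _) _)
      (Real.rpow_nonneg (tsum_nonneg fun x => Real.rpow_nonneg (abs_nonneg _) _) _)
end

section
/- Let d ≥ 1, let k ≥ 2 be an integer, set q_k := log₂(2 + 2^k), and let A, B ⊆ {-1,1}^d (viewed as subsets of ℤ^d). Then the k-higher additive energy satisfies E_k(A,B) ≤ |A|^{q_k/2} |B|^{q_k/2}. -/
open scoped BigOperators

/-- The `k`-higher additive energy of two finite subsets `A, B ⊆ ℤ^d`: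
the number of tuples `(a₁,…,a_k,b₁,…,b_k) ∈ Aᵏ × Bᵏ` with
`a₁ - b₁ = a₂ - b₂ = ⋯ = a_k - b_k`. -/
noncomputable def addEnergy (d k : ℕ) (A B : Finset (Fin d → ℤ)) : ℕ :=
  Set.ncard {ab : (Fin k → (Fin d → ℤ)) × (Fin k → (Fin d → ℤ)) |
    (∀ i, ab.1 i ∈ A) ∧ (∀ i, ab.2 i ∈ B) ∧
      ∀ i j, ab.1 i - ab.2 i = ab.1 j - ab.2 j}

section
open Real

lemma hae_L1 (q x : ℝ) (hq : 2 ≤ q) (hx : 0 ≤ x) :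
    sinh (q * x) ≤ (2 * cosh x) ^ (q - 1) * sinh x := by
  have hw : 0 ≤ 1 - exp (-2 * x) := by
    have : exp (-2 * x) ≤ 1 := exp_le_one_iff.2 (by linarith)
    linarith
  have hs : 1 - exp (-2 * x) + exp (-2 * x) = 1 := by ring
  have hc := (convexOn_rpow (p := q - 1) (by linarith)).2
    (show (2 * cosh x) ∈ Set.Ici (0:ℝ) from by have := cosh_pos x; simp; linarith)
    (show exp (-x) ∈ Set.Ici (0:ℝ) from (exp_pos _).le) hw (exp_pos _).le hs
  simp only [smul_eq_mul] at hc
  have e1 : (1 - exp (-2 * x)) * (2 * cosh x) + exp (-2 * x) * exp (-x) = exp x := by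
    have : exp (-2 * x) = exp (-x) * exp (-x) := by rw [← exp_add]; ring_nf
    have h2 : exp x * exp (-x) = 1 := by rw [← exp_add]; simp
    rw [cosh_eq, this]
    linear_combination (-exp (-x)) * h2
  rw [e1, ← exp_mul, ← exp_mul] at hc
  have h3 := mul_le_mul_of_nonneg_left hc (exp_pos x).le
  have e2 : exp x * exp (x * (q - 1)) = exp (q * x) := by rw [← exp_add]; ring_nf
  have e3 : exp x * (exp (-2 * x) * exp (-x * (q-1))) = exp (-(q * x)) := by
    rw [← exp_add, ← exp_add]; ring_nf
  have e4 : exp x * (1 - exp (-2 * x)) = 2 * sinh x := by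
    have : exp x * exp (-2 * x) = exp (-x) := by rw [← exp_add]; ring_nf
    rw [sinh_eq]; linarith
  rw [mul_add, e2, e3, ← mul_assoc, e4] at h3
  rw [sinh_eq (q * x)]
  linarith

lemma hae_L2 (r x : ℝ) (hr : 1 ≤ r) :
    2 * cosh (r * x) ≤ (2 * cosh x) ^ r := by
  have := Real.add_rpow_le_rpow_add (exp_pos x).le (exp_pos (-x)).le hr
  rw [← exp_mul, ← exp_mul] at this
  rw [cosh_eq, cosh_eq]
  ring_nf at this ⊢
  convert this using 1 

lemma hae_L3 (r x : ℝ) (hr : 1 ≤ r) (hx : 0 ≤ x) (n : ℕ) :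
    (2 * cosh (r * x)) ^ (n + 1) * sinh (r * x) ≤ (2 * cosh x) ^ ((n + 2 : ℝ) * r - 1) * sinh x := by
  have cp := cosh_pos x
  induction n with
  | zero =>
    have := hae_L1 (2 * r) x (by linarith) hx
    rw [mul_assoc, sinh_two_mul] at this
    simp
    linarith
  | succ n ih =>
    have h := mul_le_mul ih (hae_L2 r x hr) (by have := cosh_pos (r * x); positivity)
      (by have := sinh_nonneg_iff.2 hx; positivity)
    have e : (2 * cosh x) ^ (((n + 1 : ℕ) + 2 : ℝ) * r - 1) =
      (2 * cosh x) ^ ((n + 2 : ℝ) * r - 1) * (2 * cosh x) ^ r := by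
      rw [← rpow_add (by positivity)]; congr 1; push_cast; ring
    rw [e, pow_succ]
    linarith

lemma hae_G (k : ℕ) (hk : 2 ≤ k) (r x : ℝ) (hr : 1 ≤ r) (hx : 0 ≤ x) :
    (2:ℝ) ^ (k * r) - 2 ^ k ≤ (2 * cosh x) ^ (k * r) - (2 * cosh (r * x)) ^ k := by
  obtain ⟨n, rfl⟩ := Nat.exists_eq_add_of_le' hk
  have hd : ∀ y : ℝ, HasDerivAt (fun y : ℝ => (2 * cosh y) ^ ((n + 2 : ℕ) * r) - (2 * cosh (r * y)) ^ (n + 2))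
      ((2 * sinh y) * ((n + 2 : ℕ) * r) * (2 * cosh y) ^ ((n + 2 : ℕ) * r - 1)
        - (n + 2 : ℕ) * (2 * cosh (r * y)) ^ (n + 1) * (2 * (sinh (r * y) * r))) y := by
    intro y
    have cp := cosh_pos y
    have h1 := ((hasDerivAt_cosh y).const_mul 2).rpow_const (p := (n + 2 : ℕ) * r) (Or.inl (by positivity))
    have h2 : HasDerivAt (fun y : ℝ => r * y) r y := by simpa using (hasDerivAt_id y).const_mul r
    have h3 := ((h2.cosh).const_mul 2).pow (n + 2)
    exact h1.sub h3
  have hm : MonotoneOn (fun y : ℝ => (2 * cosh y) ^ ((n + 2 : ℕ) * r) - (2 * cosh (r * y)) ^ (n + 2)) (Set.Ici 0) := by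
    apply monotoneOn_of_deriv_nonneg (convex_Ici 0)
    · exact fun y _ => (hd y).continuousAt.continuousWithinAt
    · exact fun y _ => (hd y).differentiableAt.differentiableWithinAt
    · intro y hy
      rw [interior_Ici] at hy
      rw [(hd y).deriv]
      have h := hae_L3 r y hr (le_of_lt hy) n
      push_cast
      have : 0 ≤ 2 * (n + 2 : ℝ) * r := by positivity
      have := mul_le_mul_of_nonneg_left h this
      linarith
  have := hm (Set.mem_Ici.2 le_rfl) (Set.mem_Ici.2 hx) hx
  simpa using this

lemma hae_F (p x y : ℝ) (hp : 1 ≤ p) (hy : 0 ≤ y) :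
    (2 * cosh x) ^ (2 * p) - 2 ≤ (2 * cosh (2 * x) + 2 * cosh (2 * y)) ^ p - 2 * cosh (2 * p * y) := by
  have hd : ∀ y : ℝ, HasDerivAt (fun y : ℝ => (2 * cosh (2 * x) + 2 * cosh (2 * y)) ^ p - 2 * cosh (2 * p * y))
      ((2 * (sinh (2 * y) * 2)) * p * (2 * cosh (2 * x) + 2 * cosh (2 * y)) ^ (p - 1)
        - 2 * (sinh (2 * p * y) * (2 * p))) y := by
    intro y
    have cp := cosh_pos (2 * y)
    have cp' := cosh_pos (2 * x)
    have h2 (r : ℝ) : HasDerivAt (fun y : ℝ => r * y) r y := by simpa using (hasDerivAt_id y).const_mul r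
    have h1 := (((h2 2).cosh.const_mul 2).const_add (2 * cosh (2 * x))).rpow_const (p := p) (Or.inl (by positivity))
    exact h1.sub ((h2 (2 * p)).cosh.const_mul 2)
  have hm : MonotoneOn (fun y : ℝ => (2 * cosh (2 * x) + 2 * cosh (2 * y)) ^ p - 2 * cosh (2 * p * y)) (Set.Ici 0) := by
    apply monotoneOn_of_deriv_nonneg (convex_Ici 0)
    · exact fun y _ => (hd y).continuousAt.continuousWithinAt
    · exact fun y _ => (hd y).differentiableAt.differentiableWithinAt
    · intro y hy
      rw [interior_Ici] at hy
      rw [(hd y).deriv]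
      have h := hae_L1 (2 * p) y (by linarith) (le_of_lt hy)
      have cp := cosh_pos y
      have hs : 0 ≤ sinh y := sinh_nonneg_iff.2 (le_of_lt hy)
      have h5 : (2 * cosh y) ^ (2 * p - 1) = (2 * cosh y) * ((2 * cosh y) ^ 2) ^ (p - 1) := by
        rw [← rpow_natCast_mul (by positivity)]
        nth_rw 2 [← rpow_one (2 * cosh y)]
        rw [← rpow_add (by positivity)]; congr 1; push_cast; ring
      have h6 : ((2 * cosh y) ^ 2) ^ (p - 1) ≤ (2 * cosh (2 * x) + 2 * cosh (2 * y)) ^ (p - 1) := by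
        apply rpow_le_rpow (by positivity) _ (by linarith)
        have := one_le_cosh (2 * x)
        have := cosh_two_mul y
        have := cosh_sq y
        nlinarith
      have h7 : sinh (2 * p * y) ≤ (2 * cosh (2 * x) + 2 * cosh (2 * y)) ^ (p - 1) * sinh (2 * y) := by
        rw [h5] at h
        rw [sinh_two_mul]
        have := mul_le_mul_of_nonneg_left h6 (show 0 ≤ 2 * cosh y * sinh y by positivity)
        linarith
      have := mul_le_mul_of_nonneg_left h7 (show 0 ≤ 4 * p by positivity)
      linarith
  have h := hm (Set.mem_Ici.2 le_rfl) (Set.mem_Ici.2 hy) hy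
  have e : (2 * cosh x) ^ (2 * p) = (2 * cosh (2 * x) + 2) ^ p := by
    have cp := cosh_pos x
    have := rpow_natCast_mul (show 0 ≤ 2 * cosh x by positivity) 2 p
    push_cast at this
    rw [this]; congr 1
    have := cosh_two_mul x
    have := cosh_sq x
    nlinarith
  rw [e]
  simpa using h

lemma hae_H (k : ℕ) (hk : 2 ≤ k) (p x y : ℝ) (hp : (4:ℝ) ^ p = 2 + 2 ^ k) (hkp : k ≤ 2 * p) :
    2 * cosh (2 * p * y) + (2 * cosh (2 * p / k * x)) ^ k ≤ (2 * cosh (2 * x) + 2 * cosh (2 * y)) ^ p := by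
  have k2 : (2:ℝ) ≤ k := by exact_mod_cast hk
  have h1 := hae_F p |x| |y| (by linarith) (abs_nonneg y)
  have h2 := hae_G k hk (2 * p / k) |x| (by rw [le_div_iff₀ (by linarith)]; linarith) (abs_nonneg x)
  have e : k * (2 * p / k) = 2 * p := by field_simp
  have e2 : (2:ℝ) ^ (2 * p) = 4 ^ p := by rw [rpow_mul (by norm_num)]; norm_num
  rw [e, e2, hp] at h2
  have ab (r z : ℝ) : cosh (r * |z|) = cosh (r * z) := by
    rcases abs_cases z with h | h <;> simp [h.1]
  rw [ab, ab, ab] at h1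
  rw [ab] at h2
  linarith

lemma hae_pos (k : ℕ) (hk : 2 ≤ k) (p : ℝ) (hp : (4:ℝ) ^ p = 2 + 2 ^ k) (hkp : k ≤ 2 * p)
    (a b c d : ℝ) (ha : 0 < a) (hb : 0 < b) (hc : 0 < c) (hd : 0 < d) :
    (a * d) ^ p + (b * c) ^ p + ((a * c) ^ (p / k) + (b * d) ^ (p / k)) ^ k ≤ ((a + b) * (c + d)) ^ p := by
  obtain ⟨a, rfl⟩ : ∃ t, exp t = a := ⟨log a, exp_log ha⟩
  obtain ⟨b, rfl⟩ : ∃ t, exp t = b := ⟨log b, exp_log hb⟩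
  obtain ⟨c, rfl⟩ : ∃ t, exp t = c := ⟨log c, exp_log hc⟩
  obtain ⟨d, rfl⟩ : ∃ t, exp t = d := ⟨log d, exp_log hd⟩
  have k2 : (2:ℝ) ≤ k := by exact_mod_cast hk
  have h := hae_H k hk p ((a + c - b - d) / 4) ((a + d - b - c) / 4) hp hkp
  set m := (a + b + c + d) / 2 with hm
  have h2 := mul_le_mul_of_nonneg_left h (exp_pos (m * p)).le
  have e0 : exp (m * p) = exp (m * (p / k)) ^ k := by
    rw [← exp_nat_mul]; congr 1; field_simp
  have e1 : exp (m * p) * (2 * cosh (2 * p * ((a + d - b - c) / 4))) = (exp a * exp d) ^ p + (exp b * exp c) ^ p := by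
    rw [cosh_eq, ← exp_add, ← exp_add, ← exp_mul, ← exp_mul, mul_div_cancel₀ _ (by norm_num), mul_add, ← exp_add, ← exp_add]
    congr 2 <;> rw [hm] <;> ring
  have e2 : exp (m * p) * (2 * cosh (2 * p / k * ((a + c - b - d) / 4))) ^ k = ((exp a * exp c) ^ (p / k) + (exp b * exp d) ^ (p / k)) ^ k := by
    rw [e0, ← mul_pow]
    congr 1
    rw [cosh_eq, ← exp_add, ← exp_add, ← exp_mul, ← exp_mul, mul_div_cancel₀ _ (by norm_num), mul_add, ← exp_add, ← exp_add]
    congr 2 <;> rw [hm] <;> ring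
  have e3 : exp (m * p) * (2 * cosh (2 * ((a + c - b - d) / 4)) + 2 * cosh (2 * ((a + d - b - c) / 4))) ^ p = ((exp a + exp b) * (exp c + exp d)) ^ p := by
    have := cosh_pos (2 * ((a + c - b - d) / 4))
    have := cosh_pos (2 * ((a + d - b - c) / 4))
    rw [exp_mul, ← mul_rpow (exp_pos _).le (by positivity)]
    congr 1
    rw [cosh_eq, cosh_eq,  mul_div_cancel₀ _ (by norm_num), mul_div_cancel₀ _ (by norm_num)]
    simp only [mul_add, add_mul, ← exp_add]
    have i1 : m + 2 * ((a + c - b - d) / 4) = a + c := by rw [hm]; ring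
    have i2 : m + -(2 * ((a + c - b - d) / 4)) = b + d := by rw [hm]; ring
    have i3 : m + 2 * ((a + d - b - c) / 4) = a + d := by rw [hm]; ring
    have i4 : m + -(2 * ((a + d - b - c) / 4)) = b + c := by rw [hm]; ring
    rw [i1, i2, i3, i4]; ring
  rw [mul_add, e1, e2, e3] at h2
  exact h2

lemma hae_nonneg (k : ℕ) (hk : 2 ≤ k) (p : ℝ) (hp : (4:ℝ) ^ p = 2 + 2 ^ k) (hkp : k ≤ 2 * p)
    (a b c d : ℝ) (ha : 0 ≤ a) (hb : 0 ≤ b) (hc : 0 ≤ c) (hd : 0 ≤ d) :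
    (a * d) ^ p + (b * c) ^ p + ((a * c) ^ (p / k) + (b * d) ^ (p / k)) ^ k ≤ ((a + b) * (c + d)) ^ p := by
  have k2 : (2:ℝ) ≤ k := by exact_mod_cast hk
  have p0 : 0 ≤ p := by linarith
  have pk : 0 ≤ p / k := by positivity
  have c1 : Continuous (fun e : ℝ => ((a + e) * (d + e)) ^ p + ((b + e) * (c + e)) ^ p + (((a + e) * (c + e)) ^ (p / k) + ((b + e) * (d + e)) ^ (p / k)) ^ k) := by
    have := continuous_rpow_const p0
    have := continuous_rpow_const pk
    fun_prop
  have c2 : Continuous (fun e : ℝ => (((a + e) + (b + e)) * ((c + e) + (d + e))) ^ p) := by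
    have := continuous_rpow_const p0
    fun_prop
  have t1 := (c1.tendsto 0).mono_left (nhdsWithin_le_nhds (s := Set.Ioi 0))
  have t2 := (c2.tendsto 0).mono_left (nhdsWithin_le_nhds (s := Set.Ioi 0))
  have := le_of_tendsto_of_tendsto t1 t2 (by
    filter_upwards [self_mem_nhdsWithin] with e he
    have he : 0 < e := he
    exact hae_pos k hk p hp hkp _ _ _ _ (by linarith) (by linarith) (by linarith) (by linarith))
  simpa using this

def haeR {d : ℕ} (A B : Finset (Fin d → ℤ)) (x : Fin d → ℤ) : ℕ :=
  ((A ×ˢ B).filter (fun ab => ab.1 - ab.2 = x)).card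

lemma hae_energy (d k : ℕ) (hk : 2 ≤ k) (A B : Finset (Fin d → ℤ)) :
    addEnergy d k A B ≤ ∑ x ∈ (A ×ˢ B).image (fun ab => ab.1 - ab.2), haeR A B x ^ k := by
  classical
  have k0 : 0 < k := by omega
  let T : (Fin d → ℤ) → Finset ((Fin k → (Fin d → ℤ)) × (Fin k → (Fin d → ℤ))) := fun x =>
    (Fintype.piFinset (fun _ : Fin k => (A ×ˢ B).filter (fun ab => ab.1 - ab.2 = x))).image
      (fun f => (fun i => (f i).1, fun i => (f i).2))
  have hT (x) : (T x).card ≤ haeR A B x ^ k := by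
    refine Finset.card_image_le.trans ?_
    simp [haeR]
  unfold addEnergy
  calc _ ≤ Set.ncard (((A ×ˢ B).image (fun ab => ab.1 - ab.2)).biUnion T : Set ((Fin k → (Fin d → ℤ)) × (Fin k → (Fin d → ℤ)))) := by
        apply Set.ncard_le_ncard _ (Finset.finite_toSet _)
        rintro ⟨f, g⟩ ⟨h1, h2, h3⟩
        rw [Finset.mem_coe, Finset.mem_biUnion]
        refine ⟨f ⟨0, k0⟩ - g ⟨0, k0⟩, Finset.mem_image.2 ⟨(f ⟨0, k0⟩, g ⟨0, k0⟩), Finset.mem_product.2 ⟨h1 _, h2 _⟩, rfl⟩, ?_⟩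
        refine Finset.mem_image.2 ⟨fun i => (f i, g i), ?_, rfl⟩
        simp only [Fintype.mem_piFinset, Finset.mem_filter, Finset.mem_product]
        exact fun i => ⟨⟨h1 i, h2 i⟩, h3 i _⟩
    _ ≤ _ := by
        rw [Set.ncard_coe_finset]
        exact Finset.card_biUnion_le.trans (Finset.sum_le_sum fun x _ => hT x)

lemma hae_R_zero {d : ℕ} (A B : Finset (Fin d → ℤ)) (x : Fin d → ℤ)
    (h : ∀ a ∈ A, ∀ b ∈ B, a - b ≠ x) : haeR A B x = 0 := by
  rw [haeR, Finset.card_eq_zero, Finset.filter_eq_empty_iff]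
  rintro ⟨a, b⟩ hab
  rw [Finset.mem_product] at hab
  exact h a hab.1 b hab.2

lemma hae_R_left {d : ℕ} (A B : Finset (Fin d → ℤ)) (x : Fin d → ℤ) (P : (Fin d → ℤ) → Prop) [DecidablePred P] :
    haeR A B x = haeR (A.filter P) B x + haeR (A.filter (fun a => ¬ P a)) B x := by
  unfold haeR
  rw [← Finset.card_union_of_disjoint]
  · congr 1; ext ⟨a, b⟩; simp; tauto
  · rw [Finset.disjoint_left]; rintro ⟨a, b⟩; simp; tauto

lemma hae_R_right {d : ℕ} (A B : Finset (Fin d → ℤ)) (x : Fin d → ℤ) (P : (Fin d → ℤ) → Prop) [DecidablePred P] :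
    haeR A B x = haeR A (B.filter P) x + haeR A (B.filter (fun a => ¬ P a)) x := by
  unfold haeR
  rw [← Finset.card_union_of_disjoint]
  · congr 1; ext ⟨a, b⟩; simp; tauto
  · rw [Finset.disjoint_left]; rintro ⟨a, b⟩; simp; tauto

lemma hae_mink {ι : Type*} (D : Finset ι) (k : ℕ) (hk : 2 ≤ k) (f g : ι → ℕ) (p U V : ℝ) (hU : 0 ≤ U) (hV : 0 ≤ V)
    (hf : ∑ x ∈ D, (f x : ℝ) ^ k ≤ U ^ p) (hg : ∑ x ∈ D, (g x : ℝ) ^ k ≤ V ^ p) :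
    ∑ x ∈ D, ((f x : ℝ) + g x) ^ k ≤ (U ^ (p / k) + V ^ (p / k)) ^ k := by
  have k2 : (2:ℝ) ≤ k := by exact_mod_cast hk
  have h := Real.Lp_add_le_of_nonneg D (f := fun x => (f x : ℝ)) (g := fun x => (g x : ℝ)) (p := k) (by linarith)
    (fun _ _ => by positivity) (fun _ _ => by positivity)
  simp only [rpow_natCast] at h
  have key (W S : ℝ) (hW : 0 ≤ W) (hS : 0 ≤ S) (h : S ≤ W ^ p) : S ^ (1 / (k:ℝ)) ≤ W ^ (p / k) := by
    have := rpow_le_rpow hS h (show 0 ≤ 1 / (k:ℝ) by positivity)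
    rwa [← rpow_mul hW, mul_one_div] at this
  have h2 := h.trans (add_le_add (key U _ hU (by positivity) hf) (key V _ hV (by positivity) hg))
  have h3 := pow_le_pow_left₀ (by positivity) h2 k
  rwa [one_div, rpow_inv_natCast_pow (by positivity) (by omega)] at h3

set_option maxHeartbeats 1000000 in
lemma hae_main (d k : ℕ) (hk : 2 ≤ k) (p : ℝ) (hp : (4:ℝ) ^ p = 2 + 2 ^ k) (hkp : k ≤ 2 * p)
    (D : Finset (Fin d → ℤ)) (S : Finset (Fin d)) :
    ∀ A B : Finset (Fin d → ℤ), (∀ a ∈ A, ∀ i ∈ S, a i = -1 ∨ a i = 1) → (∀ a ∈ B, ∀ i ∈ S, a i = -1 ∨ a i = 1) →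
    (∀ a ∈ A, ∀ a' ∈ A, ∀ i ∉ S, a i = a' i) → (∀ a ∈ B, ∀ a' ∈ B, ∀ i ∉ S, a i = a' i) →
    ∑ x ∈ D, (haeR A B x : ℝ) ^ k ≤ ((A.card : ℝ) * B.card) ^ p := by
  classical
  have k0 : k ≠ 0 := by omega
  induction S using Finset.induction_on with
  | empty =>
    intro A B _ _ hA hB
    rcases A.eq_empty_or_nonempty with rfl | ⟨a, ha⟩
    · rw [Finset.sum_eq_zero]
      · positivity
      · intro x _; simp [haeR, k0]
    rcases B.eq_empty_or_nonempty with rfl | ⟨b, hb⟩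
    · rw [Finset.sum_eq_zero]
      · positivity
      · intro x _; simp [haeR, k0]
    have eA : A = {a} := Finset.eq_singleton_iff_unique_mem.2 ⟨ha, fun a' h' => funext fun i => hA a' h' a ha i (by simp)⟩
    have eB : B = {b} := Finset.eq_singleton_iff_unique_mem.2 ⟨hb, fun a' h' => funext fun i => hB a' h' b hb i (by simp)⟩
    subst eA eB
    have hab (x : Fin d → ℤ) : (haeR {a} {b} x : ℝ) ^ k = if a - b = x then 1 else 0 := by
      split_ifs with h <;> simp [haeR, h, k0, Finset.filter_singleton]
    simp only [hab, Finset.sum_ite_eq]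
    simp
    split_ifs <;> norm_num
  | insert i S hi ih =>
    intro A B hA hB hA' hB'
    have hf (A : Finset (Fin d → ℤ)) (hA : ∀ a ∈ A, ∀ j ∈ insert i S, a j = -1 ∨ a j = 1)
      (hA' : ∀ a ∈ A, ∀ a' ∈ A, ∀ j ∉ insert i S, a j = a' j) :
      ((∀ a ∈ A.filter (fun a => a i = 1), a i = 1) ∧ (∀ a ∈ A.filter (fun a => ¬ a i = 1), a i = -1)) ∧
      ((∀ a ∈ A.filter (fun a => a i = 1), ∀ j ∈ S, a j = -1 ∨ a j = 1) ∧
      (∀ a ∈ A.filter (fun a => ¬ a i = 1), ∀ j ∈ S, a j = -1 ∨ a j = 1)) ∧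
      (∀ a ∈ A.filter (fun a => a i = 1), ∀ a' ∈ A.filter (fun a => a i = 1), ∀ j ∉ S, a j = a' j) ∧
      (∀ a ∈ A.filter (fun a => ¬ a i = 1), ∀ a' ∈ A.filter (fun a => ¬ a i = 1), ∀ j ∉ S, a j = a' j) := by
      have hm : ∀ a ∈ A.filter (fun a => ¬ a i = 1), a i = -1 := by
        intro a ha
        rw [Finset.mem_filter] at ha
        exact (hA a ha.1 i (by simp)).resolve_right ha.2
      refine ⟨⟨fun a ha => (Finset.mem_filter.1 ha).2, hm⟩, ⟨?_, ?_⟩, ?_, ?_⟩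
      · exact fun a ha j hj => hA a (Finset.mem_filter.1 ha).1 j (by simp [hj])
      · exact fun a ha j hj => hA a (Finset.mem_filter.1 ha).1 j (by simp [hj])
      · intro a ha a' ha' j hj
        by_cases h : j = i
        · subst h; rw [(Finset.mem_filter.1 ha).2, (Finset.mem_filter.1 ha').2]
        · exact hA' a (Finset.mem_filter.1 ha).1 a' (Finset.mem_filter.1 ha').1 j (by simp [hj, h])
      · intro a ha a' ha' j hj
        by_cases h : j = i
        · subst h; rw [hm a ha, hm a' ha']
        · exact hA' a (Finset.mem_filter.1 ha).1 a' (Finset.mem_filter.1 ha').1 j (by simp [hj, h])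
    have cA := Finset.card_filter_add_card_filter_not (s := A) (fun a => a i = 1)
    have cB := Finset.card_filter_add_card_filter_not (s := B) (fun a => a i = 1)
    have rr (x) : haeR A B x = haeR (A.filter (fun a => a i = 1)) (B.filter (fun a => a i = 1)) x + haeR (A.filter (fun a => a i = 1)) (B.filter (fun a => ¬ a i = 1)) x + (haeR (A.filter (fun a => ¬ a i = 1)) (B.filter (fun a => a i = 1)) x + haeR (A.filter (fun a => ¬ a i = 1)) (B.filter (fun a => ¬ a i = 1)) x) := by
      rw [hae_R_left A B x (fun a => a i = 1), hae_R_right _ B x (fun a => a i = 1),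
       hae_R_right (A.filter (fun a => ¬ a i = 1)) B x (fun a => a i = 1)]
    obtain ⟨⟨a1, a2⟩, ⟨a3, a4⟩, a5, a6⟩ := hf A hA hA'
    obtain ⟨⟨b1, b2⟩, ⟨b3, b4⟩, b5, b6⟩ := hf B hB hB'
    generalize A.filter (fun a => a i = 1) = A1 at *
    generalize A.filter (fun a => ¬ a i = 1) = A0 at *
    generalize B.filter (fun a => a i = 1) = B1 at *
    generalize B.filter (fun a => ¬ a i = 1) = B0 at *
    have i11 := ih A1 B1 a3 b3 a5 b5
    have i10 := ih A1 B0 a3 b4 a5 b6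
    have i01 := ih A0 B1 a4 b3 a6 b5
    have i00 := ih A0 B0 a4 b4 a6 b6
    have mk := hae_mink D k hk (haeR A1 B1) (haeR A0 B0) p ((A1.card : ℝ) * B1.card) ((A0.card : ℝ) * B0.card) (by positivity) (by positivity) i11 i00
    have fin := hae_nonneg k hk p hp hkp A1.card A0.card B1.card B0.card (by positivity) (by positivity) (by positivity) (by positivity)
    have z (A B : Finset (Fin d → ℤ)) (s t : ℤ) (x : Fin d → ℤ) (hs : ∀ a ∈ A, a i = s) (ht : ∀ b ∈ B, b i = t)
        (hx : s - t ≠ x i) : haeR A B x = 0 := by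
      apply hae_R_zero
      rintro a ha b hb rfl
      apply hx
      simp [hs a ha, ht b hb]
    have pt (x) : (haeR A B x : ℝ) ^ k = (haeR A1 B0 x : ℝ) ^ k + (haeR A0 B1 x : ℝ) ^ k + ((haeR A1 B1 x : ℝ) + haeR A0 B0 x) ^ k := by
      rw [rr x]
      by_cases h0 : x i = 0
      · rw [z A1 B0 1 (-1) x a1 b2 (by omega), z A0 B1 (-1) 1 x a2 b1 (by omega)]
        simp [k0]
      · rw [z A1 B1 1 1 x a1 b1 (by omega), z A0 B0 (-1) (-1) x a2 b2 (by omega)]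
        by_cases h1 : x i = 2
        · rw [z A0 B1 (-1) 1 x a2 b1 (by omega)]
          simp [k0]
        · rw [z A1 B0 1 (-1) x a1 b2 (by omega)]
          simp [k0]
    simp only [pt, Finset.sum_add_distrib]
    rw [← cA, ← cB]
    push_cast
    linarith

end

theorem higher_additive_energy_bound (d k : ℕ) (hd : 1 ≤ d) (hk : 2 ≤ k)
    (A B : Finset (Fin d → ℤ))
    (hA : ∀ a ∈ A, ∀ i, a i = -1 ∨ a i = 1)
    (hB : ∀ b ∈ B, ∀ i, b i = -1 ∨ b i = 1) :
    (addEnergy d k A B : ℝ) ≤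
      (A.card : ℝ) ^ (Real.logb 2 (2 + 2 ^ (k : ℝ)) / 2) *
        (B.card : ℝ) ^ (Real.logb 2 (2 + 2 ^ (k : ℝ)) / 2) := by
  rw [← Real.mul_rpow (by positivity) (by positivity)]
  set p := Real.logb 2 (2 + 2 ^ (k : ℝ)) / 2 with hpd
  have h2p : 2 * p = Real.logb 2 (2 + 2 ^ (k : ℝ)) := by rw [hpd]; ring
  have hp : (4:ℝ) ^ p = 2 + 2 ^ k := by
    have : (4:ℝ) ^ p = 2 ^ (2 * p) := by rw [Real.rpow_mul (by norm_num)]; norm_num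
    rw [this, h2p, Real.rpow_logb (by norm_num) (by norm_num) (by positivity), Real.rpow_natCast]
  have hkp : (k:ℝ) ≤ 2 * p := by
    rw [h2p, Real.le_logb_iff_rpow_le (by norm_num) (by positivity)]
    linarith
  refine le_trans ?_ (hae_main d k hk p hp hkp ((A ×ˢ B).image (fun ab => ab.1 - ab.2)) Finset.univ A B
    (fun a ha i _ => hA a ha i) (fun a ha i _ => hB a ha i) (by simp) (by simp))
  exact_mod_cast hae_energy d k hk A B
end
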